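/- arXiv:2412.14891 — 5 statements merged into one kernel-verified Lean document; each statement's English description precedes it below -/
import Mathlib

section
/- For every k ≥ 2 and every ε > 0 there exists n0 such that the following holds for every n ≥ n0 and every real δ ∈ [0,1]. Every k-graph G on n vertices with e(G) ≥ (δ + ε)·binom(n,k) contains a tight component with at least δ^k·binom(n,k) edges. -/
/-- A set `C` of edges of a `k`-graph is tight-connected: between any two edges of `C` there is
a finite sequence of edges from `C` in which consecutive edges intersect in `k−1` vertices. -/
def TightConn {V : Type*} [DecidableEq V] (k : ℕ) (C : Finset (Finset V)) : Prop :=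
  ∀ e ∈ C, ∀ f ∈ C, ∃ (m : ℕ) (w : ℕ → Finset V), w 0 = e ∧ w m = f ∧
    (∀ i ≤ m, w i ∈ C) ∧ (∀ i < m, ((w i) ∩ (w (i+1))).card = k - 1)

/-!
The shadows of distinct tight components of a `k`-graph are disjoint families of `(k - 1)`-sets.
Choose a real `x` such that the largest tight component has `binom(x, k)` edges. By Lovász's form
of the Kruskal-Katona theorem every tight component `C` satisfies
`k * |C| ≤ (x - k + 1) * |∂C|`, and summing over the components gives
`k * e(G) ≤ (x - k + 1) * binom(n, k - 1)`. Hence `e(G) ≥ δ * binom(n, k)` forces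
`x - k + 1 ≥ δ * (n - k + 1)`, and then `binom(x, k) ≥ δ ^ k * binom(n, k)` factor by factor.
-/

section RealBinomial

theorem add_one_mul_ringChoose_add_one {R : Type*} [CommRing R] [BinomialRing R] (x : R) (k : ℕ) :
    (k + 1) * Ring.choose x (k + 1) = (x - k) * Ring.choose x k := by
  have h := Ring.choose_smul_choose x (Nat.le_add_right k 1)
  rw [Nat.choose_succ_self_right, Nat.add_sub_cancel_left, Ring.choose_one_right, nsmul_eq_mul] at h
  rw [mul_comm (x - k), ← h, Nat.cast_add_one]

variable {K : Type*} [Field K]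

theorem ringChoose_eq_descPochhammer_eval_div [CharZero K] (x : K) (k : ℕ) :
    Ring.choose x k = (descPochhammer K k).eval x / k.factorial := by
  rw [Ring.choose_eq_smul, smul_eq_mul, ← Polynomial.aeval_eq_smeval, Polynomial.aeval_def,
    ← Polynomial.eval_map, descPochhammer_map, inv_mul_eq_div]

variable [LinearOrder K] [IsStrictOrderedRing K]

theorem ringChoose_le_ringChoose {x y : K} {k : ℕ} (hx : k - 1 ≤ x) (hxy : x ≤ y) :
    Ring.choose x k ≤ Ring.choose y k := by
  rw [ringChoose_eq_descPochhammer_eval_div, ringChoose_eq_descPochhammer_eval_div]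
  gcongr
  exact monotoneOn_descPochhammer_eval k hx (hx.trans hxy) hxy

theorem ringChoose_nonneg {x : K} {k : ℕ} (hx : k - 1 ≤ x) : 0 ≤ Ring.choose x k := by
  rw [ringChoose_eq_descPochhammer_eval_div]
  exact div_nonneg (descPochhammer_nonneg hx) (Nat.cast_nonneg _)

theorem pow_mul_ringChoose_le {δ x y : K} {k : ℕ} (hδ₀ : 0 ≤ δ) (hδ₁ : δ ≤ 1) (hx : k ≤ x)
    (hxy : δ * (x - k) ≤ y - k) :
    δ ^ (k + 1) * Ring.choose x (k + 1) ≤ Ring.choose y (k + 1) := by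
  simp only [ringChoose_eq_descPochhammer_eval_div, descPochhammer_eval_eq_prod_range]
  have hik : ∀ i ∈ Finset.range (k + 1), (i : K) ≤ k := fun i hi ↦
    mod_cast Nat.lt_succ_iff.1 (Finset.mem_range.1 hi)
  have hprod : δ ^ (k + 1) * ∏ i ∈ Finset.range (k + 1), (x - i) =
      ∏ i ∈ Finset.range (k + 1), δ * (x - i) := by
    rw [Finset.prod_mul_distrib, Finset.prod_const, Finset.card_range]
  rw [← mul_div_assoc, hprod]
  gcongr with i hi
  · intro i hi
    exact mul_nonneg hδ₀ (by linarith [hik i hi])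
  · have hδi : δ * (k - i) ≤ k - i := mul_le_of_le_one_left (sub_nonneg.2 (hik i hi)) hδ₁
    linarith

end RealBinomial

theorem exists_ringChoose_eq {k : ℕ} {x a : ℝ} (hx : k ≤ x) (ha : 0 ≤ a)
    (hax : a ≤ Ring.choose x (k + 1)) : ∃ y ∈ Set.Icc (k : ℝ) x, Ring.choose y (k + 1) = a := by
  have hcont : Continuous fun y : ℝ ↦ Ring.choose y (k + 1) := by
    simp only [ringChoose_eq_descPochhammer_eval_div]
    fun_prop
  have hk : Ring.choose (k : ℝ) (k + 1) = 0 := by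
    rw [Ring.choose_natCast, Nat.choose_succ_self, Nat.cast_zero]
  exact intermediate_value_Icc hx hcont.continuousOn ⟨hk.trans_le ha, hax⟩

section Shadow

open Finset
open scoped FinsetFamily

variable {α β : Type*} [DecidableEq α] [DecidableEq β]

theorem shadow_map (f : α ↪ β) (𝒜 : Finset (Finset α)) :
    ∂ (𝒜.map (mapEmbedding f).toEmbedding) = (∂ 𝒜).map (mapEmbedding f).toEmbedding := by
  ext t
  constructor
  · intro ht
    obtain ⟨_, hs', _, ha', rfl⟩ := mem_shadow_iff.1 ht
    obtain ⟨s, hs, rfl⟩ := mem_map.1 hs'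
    obtain ⟨a, ha, rfl⟩ := mem_map.1 ha'
    exact mem_map.2 ⟨s.erase a, erase_mem_shadow hs ha, map_erase f s a⟩
  · intro ht
    obtain ⟨_, hs', rfl⟩ := mem_map.1 ht
    obtain ⟨s, hs, a, ha, rfl⟩ := mem_shadow_iff.1 hs'
    exact mem_shadow_iff.2 ⟨s.map f, mem_map_of_mem _ hs, f a, mem_map_of_mem f ha,
      (map_erase f s a).symm⟩

theorem memberSubfamily_subset_nonMemberSubfamily_shadow (a : α) (𝒜 : Finset (Finset α)) :
    𝒜.memberSubfamily a ⊆ (∂ 𝒜).nonMemberSubfamily a := by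
  intro s hs
  obtain ⟨hs, has⟩ := mem_memberSubfamily.1 hs
  exact mem_nonMemberSubfamily.2 ⟨mem_shadow_iff_insert_mem.2 ⟨a, has, hs⟩, has⟩

theorem shadow_memberSubfamily_subset (a : α) (𝒜 : Finset (Finset α)) :
    ∂ (𝒜.memberSubfamily a) ⊆ (∂ 𝒜).memberSubfamily a := by
  intro t ht
  obtain ⟨b, hbt, hb⟩ := mem_shadow_iff_insert_mem.1 ht
  obtain ⟨hb, hat⟩ := mem_memberSubfamily.1 hb
  rw [mem_insert, not_or] at hat
  refine mem_memberSubfamily.2 ⟨mem_shadow_iff_insert_mem.2 ⟨b, ?_, ?_⟩, hat.2⟩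
  · rw [mem_insert, not_or]
    exact ⟨Ne.symm hat.1, hbt⟩
  · rwa [insert_comm]

theorem card_memberSubfamily_add_card_shadow_le (a : α) (𝒜 : Finset (Finset α)) :
    #(𝒜.memberSubfamily a) + #(∂ (𝒜.memberSubfamily a)) ≤ #(∂ 𝒜) := by
  rw [add_comm, ← card_memberSubfamily_add_card_nonMemberSubfamily a (∂ 𝒜)]
  exact add_le_add (card_le_card (shadow_memberSubfamily_subset a 𝒜))
    (card_le_card (memberSubfamily_subset_nonMemberSubfamily_shadow a 𝒜))

theorem sized_memberSubfamily {a : α} {𝒜 : Finset (Finset α)} {k : ℕ}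
    (h𝒜 : (𝒜 : Set (Finset α)).Sized (k + 1)) :
    (𝒜.memberSubfamily a : Set (Finset α)).Sized k := by
  intro s hs
  obtain ⟨hs, has⟩ := mem_memberSubfamily.1 hs
  have := h𝒜 hs
  rwa [card_insert_of_notMem has, Nat.add_right_cancel_iff] at this

theorem le_card_shadow_of_nonempty {𝒜 : Finset (Finset α)} {k : ℕ}
    (h𝒜 : (𝒜 : Set (Finset α)).Sized k) (hne : 𝒜.Nonempty) : k ≤ #(∂ 𝒜) := by
  obtain ⟨s, hs⟩ := hne
  rw [← h𝒜 hs, ← card_image_of_injOn (erase_injOn s)]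
  exact card_le_card (image_subset_iff.2 fun a ha ↦ erase_mem_shadow hs ha)

end Shadow

section InitSeg

open Finset Finset.Colex
open scoped FinsetFamily

variable {α : Type*} [LinearOrder α]

theorem exists_isInitSeg_card_eq [Fintype α] {r m : ℕ} (hm : m ≤ (Fintype.card α).choose r) :
    ∃ 𝒞 : Finset (Finset α), IsInitSeg 𝒞 r ∧ #𝒞 = m := by
  induction m with
  | zero => exact ⟨∅, isInitSeg_empty, card_empty⟩
  | succ m ih =>
    obtain ⟨𝒞, h𝒞, rfl⟩ := ih (Nat.le_of_succ_le hm)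
    have hne : (powersetCard r univ \ 𝒞).Nonempty := by
      refine sdiff_nonempty.2 fun h ↦ ?_
      have := card_le_card h
      rw [card_powersetCard, card_univ] at this
      lia
    obtain ⟨s, hs, hmin⟩ := exists_min_image _ toColex hne
    rw [mem_sdiff, mem_powersetCard_univ] at hs
    refine ⟨insert s 𝒞, ⟨?_, ?_⟩, card_insert_of_notMem hs.2⟩
    · rw [coe_insert]
      rintro t (rfl | ht)
      exacts [hs.1, h𝒞.1 ht]
    · rintro u t hu ⟨htu, ht⟩
      by_contra htn
      rw [mem_insert, not_or] at htn
      obtain rfl | hu := mem_insert.1 hu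
      · exact htu.not_ge (hmin t (mem_sdiff.2 ⟨mem_powersetCard_univ.2 ht, htn.2⟩))
      · exact htn.2 (h𝒞.2 hu ⟨htu, ht⟩)

variable {𝒞 : Finset (Finset α)} {k : ℕ} {a : α}

theorem shadow_nonMemberSubfamily_subset_memberSubfamily (h𝒞 : IsInitSeg 𝒞 k) (ha : IsBot a) :
    ∂ (𝒞.nonMemberSubfamily a) ⊆ 𝒞.memberSubfamily a := by
  intro t ht
  obtain ⟨b, hbt, hb⟩ := mem_shadow_iff_insert_mem.1 ht
  obtain ⟨hb, hab⟩ := mem_nonMemberSubfamily.1 hb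
  rw [mem_insert, not_or] at hab
  refine mem_memberSubfamily.2 ⟨h𝒞.2 hb ⟨?_, ?_⟩, hab.2⟩
  · exact (insert_lt_insert hab.2 hbt).2 ((ha b).lt_of_ne hab.1)
  · rw [← h𝒞.1 hb, card_insert_of_notMem hab.2, card_insert_of_notMem hbt]

theorem memberSubfamily_nonempty (h𝒞 : IsInitSeg 𝒞 (k + 1)) (hne : 𝒞.Nonempty) (ha : IsBot a) :
    (𝒞.memberSubfamily a).Nonempty := by
  have hsub := card_le_card (shadow_nonMemberSubfamily_subset_memberSubfamily h𝒞 ha)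
  have hcard := card_memberSubfamily_add_card_nonMemberSubfamily a 𝒞
  have hpos := hne.card_pos
  rw [← card_pos]
  by_contra! hempty
  have hnon : (𝒞.nonMemberSubfamily a).Nonempty := card_pos.1 (by lia)
  have hshadow : k + 1 ≤ #(∂ (𝒞.nonMemberSubfamily a)) :=
    le_card_shadow_of_nonempty (h𝒞.1.mono (filter_subset _ _)) hnon
  lia

theorem ringChoose_le_card_memberSubfamily {x : ℝ} (h𝒞 : IsInitSeg 𝒞 (k + 1)) (ha : IsBot a)
    (hcard : Ring.choose x (k + 1) ≤ #𝒞)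
    (hnon : Ring.choose (x - 1) (k + 1) < #(𝒞.nonMemberSubfamily a) →
      Ring.choose (x - 1) k ≤ #(∂ (𝒞.nonMemberSubfamily a))) :
    Ring.choose (x - 1) k ≤ #(𝒞.memberSubfamily a) := by
  by_contra! hlt
  have hsplit : (#(𝒞.memberSubfamily a) : ℝ) + #(𝒞.nonMemberSubfamily a) = #𝒞 :=
    mod_cast card_memberSubfamily_add_card_nonMemberSubfamily a 𝒞
  have hpascal := Ring.choose_succ_succ (x - 1) k
  rw [sub_add_cancel] at hpascal
  have hsub : (#(∂ (𝒞.nonMemberSubfamily a)) : ℝ) ≤ #(𝒞.memberSubfamily a) :=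
    mod_cast card_le_card (shadow_nonMemberSubfamily_subset_memberSubfamily h𝒞 ha)
  linarith [hnon (by linarith)]

end InitSeg

section Lovasz

open Finset Finset.Colex
open scoped FinsetFamily

-- Deleting a minimal vertex `a` of an initial segment of colex leaves `x - 1`: the sets through
-- `a` contribute themselves and their shadow, the two terms of Pascal's rule.
theorem ringChoose_le_card_shadow_fin {n k : ℕ} {𝒜 : Finset (Finset (Fin n))} {x : ℝ}
    (h𝒜 : (𝒜 : Set (Finset (Fin n))).Sized (k + 1)) (hne : 𝒜.Nonempty) (hx : k ≤ x)
    (hcard : Ring.choose x (k + 1) ≤ #𝒜) : Ring.choose x k ≤ #(∂ 𝒜) := by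
  induction k generalizing 𝒜 x with
  | zero =>
    rw [Ring.choose_zero_right]
    exact_mod_cast le_card_shadow_of_nonempty h𝒜 hne
  | succ k ihk =>
    induction hm : #𝒜 using Nat.strong_induction_on generalizing 𝒜 x with
    | _ m ihm =>
    subst hm
    push_cast at hx
    obtain hxk | hxk := lt_or_ge x (k + 2)
    · calc Ring.choose x (k + 1) ≤ Ring.choose ((k + 2 : ℕ) : ℝ) (k + 1) :=
            ringChoose_le_ringChoose (by push_cast; linarith) (by push_cast; exact hxk.le)
        _ = (k + 2 : ℕ) := by rw [Ring.choose_natCast, Nat.choose_succ_self_right]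
        _ ≤ #(∂ 𝒜) := mod_cast le_card_shadow_of_nonempty h𝒜 hne
    obtain ⟨𝒞, h𝒞, h𝒞𝒜⟩ := exists_isInitSeg_card_eq h𝒜.card_le
    have h𝒞ne : 𝒞.Nonempty := by rwa [← card_pos, h𝒞𝒜, card_pos]
    obtain ⟨s, hs⟩ := hne
    have : Nonempty (Fin n) := (card_pos.1 (by rw [h𝒜 hs]; lia) : s.Nonempty).to_type
    obtain ⟨a, ha⟩ : ∃ a : Fin n, IsBot a := Finite.exists_min id
    have hmem_ne := memberSubfamily_nonempty h𝒞 h𝒞ne ha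
    have hmem : Ring.choose (x - 1) (k + 1) ≤ #(𝒞.memberSubfamily a) := by
      refine ringChoose_le_card_memberSubfamily h𝒞 ha (h𝒞𝒜 ▸ hcard) fun hlt ↦ ?_
      have hnonneg : 0 ≤ Ring.choose (x - 1) (k + 2) :=
        ringChoose_nonneg (by push_cast; linarith)
      refine ihm _ ?_ (h𝒞.1.mono (filter_subset _ _)) ?_ ?_ hlt.le rfl
      · rw [← h𝒞𝒜, ← card_memberSubfamily_add_card_nonMemberSubfamily a 𝒞]
        exact Nat.lt_add_of_pos_left hmem_ne.card_pos
      · exact card_pos.1 (mod_cast hnonneg.trans_lt hlt)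
      · push_cast; linarith
    have hmem_shadow : Ring.choose (x - 1) k ≤ #(∂ (𝒞.memberSubfamily a)) :=
      ihk (sized_memberSubfamily h𝒞.1) hmem_ne (by linarith) hmem
    calc Ring.choose x (k + 1)
        = Ring.choose (x - 1) k + Ring.choose (x - 1) (k + 1) := by
          rw [← Ring.choose_succ_succ, sub_add_cancel]
      _ ≤ #(𝒞.memberSubfamily a) + #(∂ (𝒞.memberSubfamily a)) := by linarith
      _ ≤ #(∂ 𝒞) := mod_cast card_memberSubfamily_add_card_shadow_le a 𝒞
      _ ≤ #(∂ 𝒜) := mod_cast kruskal_katona h𝒜 h𝒞𝒜.le h𝒞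

variable {V : Type*} [Finite V] [DecidableEq V] {𝒜 : Finset (Finset V)} {k : ℕ} {x : ℝ}

theorem ringChoose_le_card_shadow (h𝒜 : (𝒜 : Set (Finset V)).Sized (k + 1)) (hne : 𝒜.Nonempty)
    (hx : k ≤ x) (hcard : Ring.choose x (k + 1) ≤ #𝒜) : Ring.choose x k ≤ #(∂ 𝒜) := by
  cases nonempty_fintype V
  let e : V ↪ Fin (Fintype.card V) := (Fintype.equivFin V).toEmbedding
  rw [← card_map (mapEmbedding e).toEmbedding] at hcard ⊢
  rw [← shadow_map]
  refine ringChoose_le_card_shadow_fin ?_ (hne.map ..) hx hcard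
  intro s hs
  obtain ⟨t, ht, rfl⟩ := mem_map.1 hs
  exact (card_map e).trans (h𝒜 ht)

theorem add_one_mul_card_le_mul_card_shadow (h𝒜 : (𝒜 : Set (Finset V)).Sized (k + 1)) (hx : k ≤ x)
    (hcard : #𝒜 ≤ Ring.choose x (k + 1)) : ((k : ℝ) + 1) * #𝒜 ≤ (x - k) * #(∂ 𝒜) := by
  obtain rfl | hne := 𝒜.eq_empty_or_nonempty
  · simp
  obtain ⟨y, ⟨hky, hyx⟩, hy⟩ := exists_ringChoose_eq hx (Nat.cast_nonneg _) hcard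
  calc ((k : ℝ) + 1) * #𝒜 = (y - k) * Ring.choose y k := by
        rw [← hy, add_one_mul_ringChoose_add_one]
    _ ≤ (x - k) * #(∂ 𝒜) := by
        gcongr
        · exact ringChoose_nonneg (by linarith)
        · exact ringChoose_le_card_shadow h𝒜 hne hky hy.le

end Lovasz

section TightComponent

open Finset Relation
open scoped FinsetFamily

variable {V : Type*} [DecidableEq V] {k : ℕ} {E C : Finset (Finset V)} {e f g : Finset V}

/-- Two edges of the `k`-graph with edge set `E` are tightly adjacent if they share `k - 1`
vertices. Membership in `E` is part of the relation, so that its reflexive transitive closure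
describes tight connection inside `E`. -/
def TightAdj (k : ℕ) (E : Finset (Finset V)) (e f : Finset V) : Prop :=
  e ∈ E ∧ f ∈ E ∧ #(e ∩ f) = k - 1

/-- A tight component of the `k`-graph with edge set `E`: a maximal nonempty tight-connected set of
edges. -/
def IsTightComponent (k : ℕ) (E C : Finset (Finset V)) : Prop :=
  C ⊆ E ∧ C.Nonempty ∧ TightConn k C ∧
    ∀ C' : Finset (Finset V), C ⊆ C' → C' ⊆ E → TightConn k C' → C' = C

open Classical in
/-- The tight component of the edge `e` in the `k`-graph with edge set `E`, as the set of edges that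
can be reached from `e`. -/
noncomputable def tightComponent (k : ℕ) (E : Finset (Finset V)) (e : Finset V) :
    Finset (Finset V) :=
  {f ∈ E | ReflTransGen (TightAdj k E) e f}

theorem mem_tightComponent :
    f ∈ tightComponent k E e ↔ f ∈ E ∧ ReflTransGen (TightAdj k E) e f := by
  simp only [tightComponent, mem_filter]

theorem mem_tightComponent_self (he : e ∈ E) : e ∈ tightComponent k E e :=
  mem_tightComponent.2 ⟨he, .refl⟩

theorem tightComponent_subset : tightComponent k E e ⊆ E :=
  fun _ hf ↦ (mem_tightComponent.1 hf).1

theorem TightAdj.symm (h : TightAdj k E e f) : TightAdj k E f e :=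
  ⟨h.2.1, h.1, by rw [inter_comm, h.2.2]⟩

theorem TightAdj.mono (hCE : C ⊆ E) (h : TightAdj k C e f) : TightAdj k E e f :=
  ⟨hCE h.1, hCE h.2.1, h.2.2⟩

theorem reflTransGen_tightAdj_symm (h : ReflTransGen (TightAdj k E) e f) :
    ReflTransGen (TightAdj k E) f e := by
  have : Std.Symm (TightAdj k E) := ⟨fun _ _ ↦ TightAdj.symm⟩
  exact ReflTransGen.stdSymm.symm _ _ h

theorem tightComponent_congr (h : ReflTransGen (TightAdj k E) e f) :
    tightComponent k E e = tightComponent k E f := by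
  ext g
  rw [mem_tightComponent, mem_tightComponent]
  exact and_congr_right fun _ ↦ ⟨(reflTransGen_tightAdj_symm h).trans, h.trans⟩

theorem exists_walk_of_reflTransGen_tightAdj (he : e ∈ C)
    (h : ReflTransGen (TightAdj k C) e f) :
    ∃ (m : ℕ) (w : ℕ → Finset V), w 0 = e ∧ w m = f ∧
      (∀ i ≤ m, w i ∈ C) ∧ ∀ i < m, #(w i ∩ w (i + 1)) = k - 1 := by
  induction h using ReflTransGen.head_induction_on with
  | refl => exact ⟨0, fun _ ↦ f, rfl, rfl, fun _ _ ↦ he, by simp⟩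
  | @head e g heg _ ih =>
    obtain ⟨m, w, rfl, rfl, hwC, hw⟩ := ih heg.2.1
    refine ⟨m + 1, fun i ↦ Nat.casesOn i e w, rfl, rfl, ?_, ?_⟩
    · rintro (_ | i) hi
      exacts [he, hwC i (Nat.le_of_succ_le_succ hi)]
    · rintro (_ | i) hi
      exacts [heg.2.2, hw i (Nat.lt_of_succ_lt_succ hi)]

theorem tightConn_iff_reflTransGen :
    TightConn k C ↔ ∀ e ∈ C, ∀ f ∈ C, ReflTransGen (TightAdj k C) e f := by
  refine ⟨fun h e he f hf ↦ ?_, fun h e he f hf ↦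
    exists_walk_of_reflTransGen_tightAdj he (h e he f hf)⟩
  obtain ⟨m, w, rfl, rfl, hwC, hw⟩ := h e he f hf
  exact (reflTransGen_of_succ_of_le (fun i j ↦ TightAdj k C (w i) (w j))
    (fun i hi ↦ ⟨hwC i hi.2.le, hwC (i + 1) hi.2, hw i hi.2⟩) (Nat.zero_le m)).lift w fun _ _ ↦ id

theorem reflTransGen_tightAdj_tightComponent (h : ReflTransGen (TightAdj k E) e f) :
    ReflTransGen (TightAdj k (tightComponent k E e)) e f := by
  induction h with
  | refl => exact .refl
  | tail hef hfg ih =>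
    exact ih.tail ⟨mem_tightComponent.2 ⟨hfg.1, hef⟩,
      mem_tightComponent.2 ⟨hfg.2.1, hef.tail hfg⟩, hfg.2.2⟩

theorem isTightComponent_tightComponent (he : e ∈ E) :
    IsTightComponent k E (tightComponent k E e) := by
  refine ⟨tightComponent_subset, ⟨e, mem_tightComponent_self he⟩, ?_, fun C hC hCE hconn ↦ ?_⟩
  · refine tightConn_iff_reflTransGen.2 fun f hf g hg ↦ ?_
    have hef := reflTransGen_tightAdj_tightComponent (mem_tightComponent.1 hf).2
    have heg := reflTransGen_tightAdj_tightComponent (mem_tightComponent.1 hg).2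
    exact (reflTransGen_tightAdj_symm hef).trans heg
  · refine hC.antisymm' fun f hf ↦ mem_tightComponent.2 ⟨hCE hf, ?_⟩
    exact ReflTransGen.mono (fun _ _ ↦ TightAdj.mono hCE) _ _
      (tightConn_iff_reflTransGen.1 hconn e (hC (mem_tightComponent_self he)) f hf)

theorem reflTransGen_tightAdj_of_subset (hE : (E : Set (Finset V)).Sized (k + 1)) (he : e ∈ E)
    (hf : f ∈ E) (hg : #g = k) (hge : g ⊆ e) (hgf : g ⊆ f) :
    ReflTransGen (TightAdj (k + 1) E) e f := by
  obtain rfl | hef := eq_or_ne e f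
  · exact .refl
  refine .single ⟨he, hf, le_antisymm ?_ ?_⟩
  · have hssub : e ∩ f ⊂ e := inter_subset_left.ssubset_of_ne fun h ↦
      hef (eq_of_subset_of_card_le (inter_eq_left.1 h) ((hE hf).trans (hE he).symm).le)
    exact Nat.le_sub_one_of_lt ((card_lt_card hssub).trans_eq (hE he))
  · exact hg.symm.le.trans (card_le_card (subset_inter hge hgf))

theorem disjoint_shadow_tightComponent (hE : (E : Set (Finset V)).Sized (k + 1))
    (hne : tightComponent (k + 1) E e ≠ tightComponent (k + 1) E f) :
    Disjoint (∂ (tightComponent (k + 1) E e)) (∂ (tightComponent (k + 1) E f)) := by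
  refine disjoint_left.2 fun t hte htf ↦ hne ?_
  obtain ⟨e', he', hte', hcard⟩ := mem_shadow_iff_exists_mem_card_add_one.1 hte
  obtain ⟨f', hf', htf', -⟩ := mem_shadow_iff_exists_mem_card_add_one.1 htf
  rw [mem_tightComponent] at he' hf'
  have ht : #t = k := Nat.succ_injective (hcard.symm.trans (hE he'.1))
  have hef' := reflTransGen_tightAdj_of_subset hE he'.1 hf'.1 ht hte' htf'
  exact tightComponent_congr ((he'.2.trans hef').trans (reflTransGen_tightAdj_symm hf'.2))

theorem add_one_mul_card_le_of_card_tightComponent_le [Fintype V]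
    (hE : (E : Set (Finset V)).Sized (k + 1)) {x : ℝ} (hx : k ≤ x)
    (hcard : ∀ e ∈ E, #(tightComponent (k + 1) E e) ≤ Ring.choose x (k + 1)) :
    ((k : ℝ) + 1) * #E ≤ (x - k) * (Fintype.card V).choose k := by
  set K := E.image (tightComponent (k + 1) E)
  have hsized : ∀ C ∈ K, (C : Set (Finset V)).Sized (k + 1) :=
    forall_mem_image.2 fun e _ ↦ hE.mono (coe_subset.2 tightComponent_subset)
  have hcardK : ∀ C ∈ K, #C ≤ Ring.choose x (k + 1) := forall_mem_image.2 hcard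
  have hdisj : (K : Set (Finset (Finset V))).PairwiseDisjoint shadow := by
    simp only [K, coe_image]
    rintro _ ⟨e, -, rfl⟩ _ ⟨f, -, rfl⟩ hne
    exact disjoint_shadow_tightComponent hE hne
  have hcover : E ⊆ K.biUnion id := fun e he ↦ mem_biUnion.2
    ⟨_, mem_image_of_mem (tightComponent (k + 1) E) he, mem_tightComponent_self he⟩
  have hsum : #E ≤ ∑ C ∈ K, #C := (card_le_card hcover).trans card_biUnion_le
  have hshadow : ∑ C ∈ K, #(∂ C) ≤ (Fintype.card V).choose k := by
    rw [← card_biUnion hdisj]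
    refine Set.Sized.card_le fun t ht ↦ ?_
    obtain ⟨C, hC, ht⟩ := mem_biUnion.1 ht
    exact (hsized C hC).shadow ht
  calc ((k : ℝ) + 1) * #E ≤ (k + 1) * ∑ C ∈ K, (#C : ℝ) := by gcongr; exact_mod_cast hsum
    _ = ∑ C ∈ K, ((k : ℝ) + 1) * #C := mul_sum ..
    _ ≤ ∑ C ∈ K, (x - k) * #(∂ C) := sum_le_sum fun C hC ↦
        add_one_mul_card_le_mul_card_shadow (hsized C hC) hx (hcardK C hC)
    _ = (x - k) * ∑ C ∈ K, (#(∂ C) : ℝ) := (mul_sum ..).symm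
    _ ≤ (x - k) * (Fintype.card V).choose k := by
        gcongr
        exact_mod_cast hshadow

theorem exists_isTightComponent_card_eq_ringChoose [Fintype V]
    (hE : (E : Set (Finset V)).Sized (k + 1)) (hne : E.Nonempty) :
    ∃ C, IsTightComponent (k + 1) E C ∧ ∃ x : ℝ, #C = Ring.choose x (k + 1) ∧
      ((k : ℝ) + 1) * #E ≤ (x - k) * (Fintype.card V).choose k := by
  obtain ⟨e, he, hmax⟩ := exists_max_image E (fun e ↦ #(tightComponent (k + 1) E e)) hne
  have hkV : (k : ℝ) ≤ Fintype.card V :=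
    mod_cast (Nat.le_succ k).trans ((hE he).symm.trans_le (card_le_univ e))
  have hle : (#(tightComponent (k + 1) E e) : ℝ) ≤ Ring.choose (Fintype.card V : ℝ) (k + 1) := by
    rw [Ring.choose_natCast]
    exact_mod_cast (hE.mono (coe_subset.2 tightComponent_subset)).card_le
  obtain ⟨x, ⟨hkx, -⟩, hx⟩ := exists_ringChoose_eq hkV (Nat.cast_nonneg _) hle
  refine ⟨_, isTightComponent_tightComponent he, x, hx.symm, ?_⟩
  refine add_one_mul_card_le_of_card_tightComponent_le hE hkx fun f hf ↦ ?_
  rw [hx]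
  exact_mod_cast hmax f hf

theorem stmt_12_general [Fintype V] (hk : 1 ≤ k) (hE : ∀ e ∈ E, #e = k) (hne : E.Nonempty) {δ : ℝ}
    (hδ : 0 ≤ δ) (hcard : δ * (Fintype.card V).choose k ≤ #E) :
    ∃ C, IsTightComponent k E C ∧ δ ^ k * (Fintype.card V).choose k ≤ #C := by
  obtain ⟨k, rfl⟩ := Nat.exists_eq_add_of_le' hk
  set n := Fintype.card V
  have hEsized : (E : Set (Finset V)).Sized (k + 1) := hE
  obtain ⟨C, hC, x, hCx, hEx⟩ := exists_isTightComponent_card_eq_ringChoose hEsized hne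
  have hEn : (#E : ℝ) ≤ n.choose (k + 1) := mod_cast hEsized.card_le
  have hEpos : (0 : ℝ) < #E := mod_cast hne.card_pos
  have hδ₁ : δ ≤ 1 := by nlinarith
  have hkn : k + 1 ≤ n := by
    by_contra! h
    rw [Nat.choose_eq_zero_of_lt h, Nat.cast_zero] at hEn
    linarith
  have hchoose : (0 : ℝ) < n.choose k := mod_cast Nat.choose_pos (Nat.le_of_succ_le hkn)
  have habsorb := add_one_mul_ringChoose_add_one (n : ℝ) k
  rw [Ring.choose_natCast, Ring.choose_natCast] at habsorb
  have hδx : δ * (n - k) ≤ x - k := by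
    refine le_of_mul_le_mul_right ?_ hchoose
    calc δ * (n - k) * n.choose k = (k + 1) * (δ * n.choose (k + 1)) := by
          rw [mul_assoc, ← habsorb, mul_left_comm]
      _ ≤ (k + 1) * #E := by gcongr
      _ ≤ (x - k) * n.choose k := hEx
  refine ⟨C, hC, ?_⟩
  rw [hCx, ← Ring.choose_natCast]
  exact pow_mul_ringChoose_le hδ hδ₁ (mod_cast Nat.le_of_succ_le hkn) hδx

end TightComponent

/-- For every `k ≥ 2` and `ε > 0` there exists `n0` such that for every
`n ≥ n0` and every `δ ∈ [0,1]`, every `k`-graph `G` on `n` vertices with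
`e(G) ≥ (δ+ε)·C(n,k)` contains a tight component with at least `δ^k·C(n,k)` edges. -/
theorem stmt_12 (k : ℕ) (hk : 2 ≤ k) (ε : ℝ) (hε : 0 < ε) :
    ∃ n0 : ℕ, ∀ n : ℕ, n0 ≤ n →
    ∀ (V : Type) [Fintype V] [DecidableEq V], Fintype.card V = n →
    ∀ E : Finset (Finset V), (∀ e ∈ E, e.card = k) →
    ∀ δ : ℝ, 0 ≤ δ → δ ≤ 1 →
    (δ + ε) * (n.choose k : ℝ) ≤ (E.card : ℝ) →
    ∃ C : Finset (Finset V), C ⊆ E ∧ C.Nonempty ∧ TightConn k C ∧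
      (∀ C' : Finset (Finset V), C ⊆ C' → C' ⊆ E → TightConn k C' → C' = C) ∧
      δ ^ k * (n.choose k : ℝ) ≤ (C.card : ℝ) := by
  refine ⟨k, ?_⟩
  rintro n hn V _ _ rfl E hE δ hδ - hcard
  have hchoose : (0 : ℝ) < (Fintype.card V).choose k := mod_cast Nat.choose_pos hn
  have hne : E.Nonempty := by
    rw [← Finset.card_pos, ← Nat.cast_pos (α := ℝ)]
    exact lt_of_lt_of_le (by positivity) hcard
  have hδE : δ * ((Fintype.card V).choose k : ℝ) ≤ E.card :=
    le_trans (by gcongr; linarith) hcard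
  obtain ⟨C, ⟨hCE, hCne, hconn, hmax⟩, hC⟩ := stmt_12_general (by lia) hE hne hδ hδE
  exact ⟨C, hCE, hCne, hconn, hmax, hC⟩
end

section
/- For all integers k ≥ 2, 1 ≤ d < k, r ≥ 1 and every ε > 0, there exists s0 ≥ k + r such that for every integer s ≥ s0 there exists n0 such that the following holds for every n ≥ n0 and every real δ ≥ 0. Let G be a k-graph on an n-element vertex set with δ_d(G) ≥ (δ + ε)·binom(n−d, k−d). Then for every r-element vertex set R, the number of s-element vertex sets S with R ⊆ S and δ_d(G[S]) ≥ (δ + ε/2)·binom(s−d, k−d) is at least (1 − e^{−√s})·binom(n−r, s−r). -/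
/-!
Fix a `d`-set `D`, put `W = R ∪ D` and `t = k - d`. When `S` is a random `s`-superset of `W`, the
set `T = S \ W` is a random `m`-set with `m = s - #W`, and the degree of `D` in `G[S]` is at least
the number of members of the link of `D` inside `T`.

To bound the probability that `T` is sparse, fill it by a function `g` on `m` indices, `q = m / t`
disjoint blocks of which have size `t`, and count the blocks mapped onto members of the link. Under
the uniform measure on all functions the blocks are independent, so the exponential moment of this
count factorizes. The restriction of `g` to the bijections onto a given `T` has as average count
`q` times the density of the link in `T`, so by Jensen's inequality a sparse `T` contributes a lot
to the exponential moment; hence few `T` are sparse, with an error `exp (-c * s)`.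

Weighting each `D` by the number of `s`-supersets of `R ∪ D` makes the union bound over all
`d`-sets `D ⊆ S` cost only a factor `s.choose d`, whatever the order of `G`.
-/

open Finset
open scoped Nat

lemma exp_neg_le_one_sub_add_sq_div_two {x : ℝ} (hx : 0 ≤ x) :
    Real.exp (-x) ≤ 1 - x + x ^ 2 / 2 := by
  have pos : 0 ≤ 1 - x + x ^ 2 / 2 := by nlinarith [sq_nonneg (x - 1)]
  rw [Real.exp_neg, inv_le_iff_one_le_mul₀ (Real.exp_pos _)]
  calc 1 ≤ (1 - x + x ^ 2 / 2) * (1 + x + x ^ 2 / 2) := by nlinarith [sq_nonneg (x ^ 2)]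
    _ ≤ (1 - x + x ^ 2 / 2) * Real.exp x := by
        gcongr
        exact Real.quadratic_le_exp_of_nonneg hx

lemma card_mul_exp_le_sum_exp {α : Type*} {s : Finset α} {f : α → ℝ} {c : ℝ}
    (h : #s * c ≤ ∑ i ∈ s, f i) : #s * Real.exp c ≤ ∑ i ∈ s, Real.exp (f i) := by
  -- The graph of `exp` lies above its tangent line at `c`.
  calc #s * Real.exp c ≤ ∑ i ∈ s, Real.exp c * (f i - c + 1) := by
        rw [← mul_sum, sum_add_distrib, sum_sub_distrib]
        simp only [sum_const, nsmul_eq_mul, mul_one]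
        rw [mul_comm]
        gcongr
        linarith
    _ ≤ ∑ i ∈ s, Real.exp (f i) := by
        gcongr with i
        rw [← le_div_iff₀' (Real.exp_pos c), ← Real.exp_sub]
        exact Real.add_one_le_exp _

section ImageCount

variable {ι V : Type*} [Fintype ι] [DecidableEq ι] [Fintype V] [DecidableEq V]

lemma card_filter_image_univ_eq {T : Finset V} (hT : #T = Fintype.card ι) :
    #{g : ι → V | univ.image g = T} = (Fintype.card ι)! := by
  have equiv : ι ≃ T := Fintype.equivOfCardEq (by simp [hT])
  rw [← Fintype.card_equiv equiv, ← card_univ,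
    ← card_image_of_injective (f := fun (e : ι ≃ T) i ↦ (e i : V)) univ
      fun e e' h ↦ Equiv.ext fun i ↦ Subtype.ext (congrFun h i)]
  congr 1
  ext g
  simp only [mem_filter, mem_image, mem_univ, true_and]
  refine ⟨fun hg ↦ ?_, ?_⟩
  · let g' : ι → T := fun i ↦ ⟨g i, hg ▸ mem_image_of_mem g (mem_univ i)⟩
    have surj : Function.Surjective g' := by
      rintro ⟨x, hx⟩
      obtain ⟨i, -, rfl⟩ := mem_image.1 (hg ▸ hx)
      exact ⟨i, rfl⟩
    exact ⟨.ofBijective g' (surj.bijective_of_nat_card_le (by simp [hT])), rfl⟩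
  · rintro ⟨e, rfl⟩
    ext x
    simp only [mem_image, mem_univ, true_and]
    exact ⟨fun ⟨i, hi⟩ ↦ hi ▸ (e i).2, fun hx ↦ ⟨e.symm ⟨x, hx⟩, by simp⟩⟩

lemma card_filter_image_univ_mem {F : Finset (Finset V)}
    (hF : (F : Set (Finset V)).Sized (Fintype.card ι)) :
    #{h : ι → V | univ.image h ∈ F} = #F * (Fintype.card ι)! := by
  rw [card_eq_sum_card_fiberwise (f := fun h : ι → V ↦ univ.image h) (t := F)
    fun h hh ↦ by simpa using hh]
  refine sum_const_nat fun f hf ↦ ?_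
  rw [← card_filter_image_univ_eq (hF hf), filter_filter]
  congr 1
  ext h
  simp only [mem_filter, mem_univ, true_and, and_iff_right_iff_imp]
  rintro rfl
  exact hf

lemma card_filter_image_univ_eq_and_image_eq_le {T f : Finset V} {B : Finset ι}
    (hT : #T = Fintype.card ι) (hf : #f = #B) (hfT : f ⊆ T) :
    #{g : ι → V | univ.image g = T ∧ B.image g = f} ≤ (#B)! * (Fintype.card ι - #B)! := by
  have count_on_B : #{u : B → V | univ.image u = f} = (#B)! := by
    rw [card_filter_image_univ_eq (by simp [hf]), Fintype.card_coe]
  have count_off_B : #{u : ↥Bᶜ → V | univ.image u = T \ f} = (Fintype.card ι - #B)! := by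
    rw [card_filter_image_univ_eq (by rw [card_sdiff_of_subset hfT, Fintype.card_coe, card_compl,
      hT, hf]), Fintype.card_coe, card_compl]
  rw [← count_on_B, ← count_off_B, ← card_product]
  refine card_le_card_of_injOn (fun g ↦ (fun i ↦ g i, fun i ↦ g i)) ?_ ?_
  · intro g hg
    obtain ⟨rfl, rfl⟩ : univ.image g = T ∧ B.image g = f := by simpa using hg
    have inj : Function.Injective g := by
      rw [← card_univ, card_image_iff, coe_univ, Set.injOn_univ] at hT
      exact hT
    have off_B : univ.image (fun i : ↥Bᶜ ↦ g i) = univ.image g \ B.image g := by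
      rw [← image_sdiff _ _ inj, ← compl_eq_univ_sdiff]
      ext; simp
    have on_B : univ.image (fun i : B ↦ g i) = B.image g := by ext; simp
    rw [mem_coe, mem_product, mem_filter, mem_filter]
    exact ⟨⟨mem_univ _, on_B⟩, mem_univ _, off_B⟩
  · intro g _ g' _ h
    obtain ⟨h_on, h_off⟩ := Prod.mk.inj h
    ext i
    by_cases hi : i ∈ B
    · exact congrFun h_on ⟨i, hi⟩
    · exact congrFun h_off ⟨i, by simpa using hi⟩

lemma choose_mul_card_filter_image_mem_le {F : Finset (Finset V)} {T : Finset V} {B : Finset ι}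
    (hF : (F : Set (Finset V)).Sized #B) (hT : #T = Fintype.card ι) :
    (Fintype.card ι).choose #B * #{g : ι → V | univ.image g = T ∧ B.image g ∈ F} ≤
      #{f ∈ F | f ⊆ T} * (Fintype.card ι)! := by
  have fiber_bound : #{g : ι → V | univ.image g = T ∧ B.image g ∈ F} ≤
      #{f ∈ F | f ⊆ T} * ((#B)! * (Fintype.card ι - #B)!) := by
    rw [card_eq_sum_card_fiberwise (f := fun g : ι → V ↦ B.image g) (t := {f ∈ F | f ⊆ T})
      (by
        intro g hg
        obtain ⟨rfl, hgF⟩ : univ.image g = T ∧ B.image g ∈ F := by simpa using hg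
        simpa using ⟨hgF, image_subset_image (subset_univ _)⟩), ← smul_eq_mul]
    refine sum_le_card_nsmul _ _ _ fun f hf ↦ ?_
    obtain ⟨hfF, hfT⟩ := mem_filter.1 hf
    refine le_trans (card_le_card fun g hg ↦ ?_)
      (card_filter_image_univ_eq_and_image_eq_le hT (hF hfF) hfT)
    simp only [mem_filter, mem_univ, true_and] at hg ⊢
    exact ⟨hg.1.1, hg.2⟩
  calc _ ≤ (Fintype.card ι).choose #B *
        (#{f ∈ F | f ⊆ T} * ((#B)! * (Fintype.card ι - #B)!)) := by gcongr
    _ = #{f ∈ F | f ⊆ T} *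
        ((Fintype.card ι).choose #B * (#B)! * (Fintype.card ι - #B)!) := by ring
    _ = _ := by rw [Nat.choose_mul_factorial_mul_factorial (card_le_univ B)]

end ImageCount

section Blocks

variable {κ τ ρ V : Type*} [Fintype κ] [Fintype τ] [Fintype ρ]
  [DecidableEq κ] [DecidableEq τ] [DecidableEq ρ] [DecidableEq V]

lemma sum_prod_blocks {α R : Type*} [Fintype α] [CommSemiring R] (w : (τ → α) → R) :
    ∑ g : (κ × τ) ⊕ ρ → α, ∏ j, w (fun i ↦ g (.inl (j, i))) =
      (Fintype.card α : R) ^ Fintype.card ρ * (∑ h, w h) ^ Fintype.card κ := by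
  rw [← (Equiv.sumArrowEquivProdArrow _ _ α).symm.sum_comp, Fintype.sum_prod_type]
  simp only [Equiv.sumArrowEquivProdArrow_symm_apply_inl, sum_const, card_univ, Fintype.card_fun,
    nsmul_eq_mul, Nat.cast_pow]
  rw [← mul_sum, ← (Equiv.curry _ _ α).symm.sum_comp, ← card_univ (α := κ), ← prod_const,
    Fintype.prod_sum]
  rfl

/-- The number of indices `j : κ` whose block `{j} × τ` is mapped by `g` onto a member of `F`: for
random `g`, a sum of independent indicators. The indices in `ρ` belong to no block; they make up for
the remainder when the block size does not divide the number of indices. -/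
def blockCount (F : Finset (Finset V)) (g : (κ × τ) ⊕ ρ → V) : ℕ :=
  #{j | univ.image (fun i ↦ g (.inl (j, i))) ∈ F}

lemma choose_mul_sum_blockCount_le [Fintype V] {F : Finset (Finset V)}
    (hF : (F : Set (Finset V)).Sized (Fintype.card τ)) {T : Finset V}
    (hT : #T = Fintype.card ((κ × τ) ⊕ ρ)) :
    (Fintype.card ((κ × τ) ⊕ ρ)).choose (Fintype.card τ) *
        ∑ g : (κ × τ) ⊕ ρ → V with univ.image g = T, blockCount F g ≤
      Fintype.card κ * (#{f ∈ F | f ⊆ T} * (Fintype.card ((κ × τ) ⊕ ρ))!) := by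
  simp only [blockCount, card_filter]
  rw [sum_comm, mul_sum, ← card_univ (α := κ), ← smul_eq_mul]
  refine sum_le_card_nsmul _ _ _ fun j _ ↦ ?_
  let block : Finset ((κ × τ) ⊕ ρ) := univ.image fun i ↦ .inl (j, i)
  have card_block : #block = Fintype.card τ :=
    card_image_of_injective _ fun _ _ h ↦ (Prod.mk.inj (Sum.inl.inj h)).2
  have image_block (g : (κ × τ) ⊕ ρ → V) :
      block.image g = univ.image fun i ↦ g (.inl (j, i)) := image_image
  have := choose_mul_card_filter_image_mem_le (B := block) (card_block ▸ hF) hT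
  simpa only [← card_filter, filter_filter, card_block, image_block] using this

lemma sum_exp_neg_mul_indicator_le [Fintype V] {F : Finset (Finset V)}
    (hF : (F : Set (Finset V)).Sized (Fintype.card τ)) {a η : ℝ} (ha : 0 ≤ a) (hη : 0 ≤ η)
    (hFa : a * (Fintype.card V : ℝ) ^ Fintype.card τ ≤ #F * (Fintype.card τ)!) :
    ∑ h : τ → V, (if univ.image h ∈ F then Real.exp (-η) else 1) ≤
      (Fintype.card V : ℝ) ^ Fintype.card τ * Real.exp (-(a * (η - η ^ 2 / 2))) := by
  set N : ℝ := (Fintype.card V : ℝ) ^ Fintype.card τ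
  have exp_le_one : Real.exp (-η) ≤ 1 := by simpa using hη
  calc ∑ h : τ → V, (if univ.image h ∈ F then Real.exp (-η) else 1)
      = ∑ h : τ → V, (1 - (1 - Real.exp (-η)) * if univ.image h ∈ F then 1 else 0) := by
        refine sum_congr rfl fun h _ ↦ ?_
        split_ifs <;> ring
    _ = N - (1 - Real.exp (-η)) * (#F * (Fintype.card τ)!) := by
        rw [sum_sub_distrib, ← mul_sum, sum_boole, card_filter_image_univ_mem hF]
        simp [N]
    _ ≤ N - (1 - Real.exp (-η)) * (a * N) := by gcongr
    _ = N * (1 - a * (1 - Real.exp (-η))) := by ring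
    _ ≤ N * (1 - a * (η - η ^ 2 / 2)) := by
        gcongr N * (1 - a * ?_)
        linarith [exp_neg_le_one_sub_add_sq_div_two hη]
    _ ≤ N * Real.exp (-(a * (η - η ^ 2 / 2))) := by
        gcongr
        exact Real.one_sub_le_exp_neg _

lemma sum_exp_neg_mul_blockCount_le [Fintype V] {F : Finset (Finset V)}
    (hF : (F : Set (Finset V)).Sized (Fintype.card τ)) {a η : ℝ} (ha : 0 ≤ a) (hη : 0 ≤ η)
    (hFa : a * (Fintype.card V : ℝ) ^ Fintype.card τ ≤ #F * (Fintype.card τ)!) :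
    ∑ g : (κ × τ) ⊕ ρ → V, Real.exp (-η * blockCount F g) ≤
      (Fintype.card V : ℝ) ^ Fintype.card ((κ × τ) ⊕ ρ) *
        Real.exp (-(Fintype.card κ * (a * (η - η ^ 2 / 2)))) := by
  have exp_blockCount (g : (κ × τ) ⊕ ρ → V) : Real.exp (-η * blockCount F g) =
      ∏ j, if univ.image (fun i ↦ g (.inl (j, i))) ∈ F then Real.exp (-η) else 1 := by
    rw [prod_ite, prod_const, prod_const_one, mul_one, ← Real.exp_nat_mul, mul_comm, blockCount]
  simp only [exp_blockCount,
    sum_prod_blocks fun h : τ → V ↦ if univ.image h ∈ F then Real.exp (-η) else 1]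
  calc _ ≤ (Fintype.card V : ℝ) ^ Fintype.card ρ * ((Fintype.card V : ℝ) ^ Fintype.card τ *
        Real.exp (-(a * (η - η ^ 2 / 2)))) ^ Fintype.card κ := by
        gcongr
        exact sum_exp_neg_mul_indicator_le hF ha hη hFa
    _ = _ := by
        rw [mul_pow, ← Real.exp_nat_mul, Fintype.card_sum, Fintype.card_prod, pow_add, pow_mul']
        ring_nf

/-- The `m`-element sets inside which the `t`-uniform family `F` has density less than `b`,
the bad events of the tail bound. -/
noncomputable def sparseSets [Fintype V] (F : Finset (Finset V)) (t m : ℕ) (b : ℝ) :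
    Finset (Finset V) :=
  {T ∈ powersetCard m univ | (#{f ∈ F | f ⊆ T} : ℝ) < b * m.choose t}

lemma factorial_mul_exp_le_sum_exp_neg_mul_blockCount [Fintype V] {F : Finset (Finset V)}
    (hF : (F : Set (Finset V)).Sized (Fintype.card τ)) {b η : ℝ} (hη : 0 ≤ η) {T : Finset V}
    (hT : T ∈ sparseSets F (Fintype.card τ) (Fintype.card ((κ × τ) ⊕ ρ)) b) :
    (Fintype.card ((κ × τ) ⊕ ρ))! * Real.exp (-η * (Fintype.card κ * b)) ≤
      ∑ g : (κ × τ) ⊕ ρ → V with univ.image g = T, Real.exp (-η * blockCount F g) := by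
  set m := Fintype.card ((κ × τ) ⊕ ρ)
  obtain ⟨hTm, hTF⟩ := mem_filter.1 hT
  replace hTm := (mem_powersetCard.1 hTm).2
  have sum_blockCount : ∑ g : (κ × τ) ⊕ ρ → V with univ.image g = T, (blockCount F g : ℝ) ≤
      m ! * (Fintype.card κ * b) := by
    have choose_pos : (0 : ℝ) < m.choose (Fintype.card τ) := by
      rw [Nat.cast_pos, Nat.pos_iff_ne_zero]
      intro h
      rw [h, Nat.cast_zero, mul_zero] at hTF
      exact hTF.not_ge (Nat.cast_nonneg _)
    refine le_of_mul_le_mul_left ?_ choose_pos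
    calc _ ≤ (Fintype.card κ : ℝ) * (#{f ∈ F | f ⊆ T} * m !) :=
          mod_cast choose_mul_sum_blockCount_le hF hTm
      _ ≤ Fintype.card κ * (b * m.choose (Fintype.card τ) * m !) := by gcongr
      _ = _ := by ring
  rw [← card_filter_image_univ_eq hTm] at sum_blockCount ⊢
  refine card_mul_exp_le_sum_exp ?_
  rw [← mul_sum]
  linarith [mul_le_mul_of_nonneg_left sum_blockCount hη]

theorem card_sparseSets_mul_factorial_le [Fintype V] {F : Finset (Finset V)} {t : ℕ}
    (hF : (F : Set (Finset V)).Sized t) (m : ℕ) {a η : ℝ} (ha : 0 ≤ a) (ha_one : a ≤ 1)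
    (hη : 0 ≤ η) (hFa : a * (Fintype.card V : ℝ) ^ t ≤ #F * t !) :
    #(sparseSets F t m (a - η)) * (m ! : ℝ) ≤
      (Fintype.card V : ℝ) ^ m * Real.exp (-((m / t : ℕ) * (η ^ 2 / 2))) := by
  set q := m / t
  have card_index : Fintype.card ((Fin q × Fin t) ⊕ Fin (m % t)) = m := by
    simp [q, Nat.div_add_mod']
  rw [← Fintype.card_fin t] at hF hFa
  have lower : #(sparseSets F t m (a - η)) * (m ! * Real.exp (-η * (q * (a - η)))) ≤
      ∑ g : (Fin q × Fin t) ⊕ Fin (m % t) → V, Real.exp (-η * blockCount F g) := by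
    rw [← nsmul_eq_mul, ← sum_fiberwise univ fun g ↦ univ.image g]
    refine (card_nsmul_le_sum _ _ _ fun T hT ↦ ?_).trans <|
      sum_le_univ_sum_of_nonneg fun T ↦ sum_nonneg fun g _ ↦ (Real.exp_pos _).le
    have := factorial_mul_exp_le_sum_exp_neg_mul_blockCount (κ := Fin q) (ρ := Fin (m % t))
      (b := a - η) hF hη (T := T) (by rwa [card_index, Fintype.card_fin])
    rwa [card_index, Fintype.card_fin] at this
  have upper := sum_exp_neg_mul_blockCount_le (κ := Fin q) (ρ := Fin (m % t)) hF ha hη hFa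
  rw [card_index, Fintype.card_fin] at upper
  refine le_of_mul_le_mul_right ?_ (Real.exp_pos (-η * (q * (a - η))))
  rw [mul_assoc, mul_assoc, ← Real.exp_add]
  refine (lower.trans upper).trans ?_
  gcongr
  nlinarith [mul_nonneg (mul_nonneg q.cast_nonneg (sq_nonneg η)) (sub_nonneg.2 ha_one)]

end Blocks

section Supersets

variable {V : Type*} [Fintype V] [DecidableEq V]

/-- The `s`-element sets of vertices containing `W`, the sample space for
a random induced subgraph on `s` vertices that keeps `W`. -/
def supersetsCard (W : Finset V) (s : ℕ) : Finset (Finset V) :=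
  {S ∈ powersetCard s univ | W ⊆ S}

@[simp]
lemma mem_supersetsCard {W S : Finset V} {s : ℕ} : S ∈ supersetsCard W s ↔ #S = s ∧ W ⊆ S := by
  simp [supersetsCard, mem_powersetCard]

lemma card_supersetsCard {W : Finset V} {s : ℕ} (hs : #W ≤ s) :
    #(supersetsCard W s) = (Fintype.card V - #W).choose (s - #W) := by
  rw [← card_compl, ← card_powersetCard]
  refine card_nbij' (· \ W) (· ∪ W) ?_ ?_ ?_ ?_
  · intro S hS
    obtain ⟨rfl, hWS⟩ := mem_supersetsCard.1 hS
    exact mem_powersetCard.2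
      ⟨subset_compl_iff_disjoint_right.2 sdiff_disjoint, card_sdiff_of_subset hWS⟩
  · intro T hT
    obtain ⟨hTW, hTs⟩ := mem_powersetCard.1 hT
    refine mem_supersetsCard.2 ⟨?_, subset_union_right⟩
    rw [card_union_of_disjoint (subset_compl_iff_disjoint_right.1 hTW), hTs,
      Nat.sub_add_cancel hs]
  · intro S hS
    exact sdiff_union_of_subset (mem_supersetsCard.1 hS).2
  · intro T hT
    exact union_sdiff_cancel_right (subset_compl_iff_disjoint_right.1 (mem_powersetCard.1 hT).1)

lemma sum_card_supersetsCard_union (R : Finset V) (s d : ℕ) :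
    ∑ D ∈ powersetCard d univ, #(supersetsCard (R ∪ D) s) = #(supersetsCard R s) * s.choose d := by
  calc ∑ D ∈ powersetCard d univ, #(supersetsCard (R ∪ D) s)
      = ∑ D ∈ powersetCard d univ, #{S ∈ supersetsCard R s | D ⊆ S} := by
        refine sum_congr rfl fun D _ ↦ congrArg card ?_
        ext S
        simp [union_subset_iff, and_assoc]
    _ = ∑ S ∈ supersetsCard R s, #{D ∈ powersetCard d univ | D ⊆ S} := by
        simp only [card_filter]
        exact sum_comm
    _ = #(supersetsCard R s) * s.choose d := by
        refine sum_const_nat fun S hS ↦ ?_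
        rw [← (mem_supersetsCard.1 hS).1, ← card_powersetCard]
        congr 1
        ext D
        simp [mem_powersetCard, and_comm]

theorem one_sub_mul_card_supersetsCard_le {R : Finset V} {s d : ℕ} {p : ℝ}
    {P : Finset V → Finset V → Prop} [∀ D S, Decidable (P D S)]
    (hP : ∀ D, #D = d →
      (#{S ∈ supersetsCard (R ∪ D) s | ¬ P D S} : ℝ) ≤ p * #(supersetsCard (R ∪ D) s)) :
    (1 - s.choose d * p) * #(supersetsCard R s) ≤
      (#{S ∈ supersetsCard R s | ∀ D ∈ powersetCard d S, P D S} : ℝ) := by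
  set bad : Finset V → Finset (Finset V) := fun D ↦ {S ∈ supersetsCard (R ∪ D) s | ¬ P D S}
  have cover : {S ∈ supersetsCard R s | ¬ ∀ D ∈ powersetCard d S, P D S} ⊆
      (powersetCard d univ).biUnion bad := by
    intro S hS
    simp only [mem_filter, mem_supersetsCard, mem_powersetCard, not_forall] at hS
    obtain ⟨⟨hSs, hRS⟩, D, ⟨hDS, hDd⟩, hPDS⟩ := hS
    simp only [bad, mem_biUnion, mem_filter, mem_supersetsCard, mem_powersetCard]
    exact ⟨D, ⟨subset_univ D, hDd⟩, ⟨hSs, union_subset hRS hDS⟩, hPDS⟩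
  have card_bad : (#{S ∈ supersetsCard R s | ¬ ∀ D ∈ powersetCard d S, P D S} : ℝ) ≤
      s.choose d * p * #(supersetsCard R s) := by
    calc _ ≤ ∑ D ∈ powersetCard d univ, (#(bad D) : ℝ) :=
          mod_cast (card_le_card cover).trans card_biUnion_le
      _ ≤ ∑ D ∈ powersetCard d univ, p * #(supersetsCard (R ∪ D) s) :=
          sum_le_sum fun D hD ↦ hP D (mem_powersetCard.1 hD).2
      _ = p * (#(supersetsCard R s) * s.choose d) := by
          rw [← mul_sum, ← Nat.cast_sum, sum_card_supersetsCard_union, Nat.cast_mul]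
      _ = _ := by ring
  have split : (#{S ∈ supersetsCard R s | ∀ D ∈ powersetCard d S, P D S} : ℝ) +
      #{S ∈ supersetsCard R s | ¬ ∀ D ∈ powersetCard d S, P D S} = #(supersetsCard R s) :=
    mod_cast card_filter_add_card_filter_not ..
  linarith

end Supersets

section Link

variable {V : Type*} [DecidableEq V]

/-- The link of `D` in the hypergraph `E`: the sets `e \ D`, where `e` runs over the edges
containing `D`. Its cardinality is the degree of `D`. -/
def link (E : Finset (Finset V)) (D : Finset V) : Finset (Finset V) :=
  {e ∈ E | D ⊆ e}.image (· \ D)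

lemma card_link (E : Finset (Finset V)) (D : Finset V) : #(link E D) = #{e ∈ E | D ⊆ e} :=
  card_image_of_injOn <| (superset_injOn_sdiff D).mono fun _ he ↦ (mem_filter.1 he).2

lemma sized_link {E : Finset (Finset V)} {D : Finset V} {t : ℕ}
    (hE : (E : Set (Finset V)).Sized (#D + t)) : (link E D : Set (Finset V)).Sized t := by
  intro f hf
  obtain ⟨e, he, rfl⟩ := mem_image.1 hf
  obtain ⟨heE, hDe⟩ := mem_filter.1 he
  rw [card_sdiff_of_subset hDe, hE heE, Nat.add_sub_cancel_left]

lemma card_filter_subset_le_choose [Fintype V] {E : Finset (Finset V)} {D : Finset V} {t : ℕ}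
    (hE : (E : Set (Finset V)).Sized (#D + t)) :
    #{e ∈ E | D ⊆ e} ≤ (Fintype.card V - #D).choose t := by
  rw [← card_link, ← card_compl, ← card_powersetCard]
  refine card_le_card fun f hf ↦ mem_powersetCard.2 ⟨?_, sized_link hE hf⟩
  obtain ⟨e, -, rfl⟩ := mem_image.1 hf
  exact subset_compl_iff_disjoint_right.2 sdiff_disjoint

lemma card_link_filter_subset_sdiff_le {E : Finset (Finset V)} {D W S : Finset V} (hDW : D ⊆ W)
    (hWS : W ⊆ S) : #{f ∈ link E D | f ⊆ S \ W} ≤ #{e ∈ E | D ⊆ e ∧ e ⊆ S} := by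
  refine (card_le_card ?_).trans (card_image_le (f := (· \ D)))
  intro f hf
  obtain ⟨hf, hfS⟩ := mem_filter.1 hf
  obtain ⟨e, he, rfl⟩ := mem_image.1 hf
  obtain ⟨heE, hDe⟩ := mem_filter.1 he
  refine mem_image_of_mem _ (mem_filter.2 ⟨heE, hDe, ?_⟩)
  rw [← sdiff_union_of_subset hDe]
  exact union_subset (hfS.trans sdiff_subset) (hDW.trans hWS)

lemma card_filter_degree_lt_le_card_sparseSets [Fintype V] {E : Finset (Finset V)}
    {D W : Finset V} (hDW : D ⊆ W) {s t : ℕ} {b c : ℝ} (hc : c ≤ b * (s - #W).choose t) :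
    #{S ∈ supersetsCard W s | (#{e ∈ E | D ⊆ e ∧ e ⊆ S} : ℝ) < c} ≤
      #(sparseSets (link E D) t (s - #W) b) := by
  refine card_le_card_of_injOn (· \ W) ?_ <| (superset_injOn_sdiff W).mono fun S hS ↦
    (mem_supersetsCard.1 (mem_filter.1 hS).1).2
  intro S hS
  obtain ⟨hS, hlt⟩ := mem_filter.1 hS
  obtain ⟨rfl, hWS⟩ := mem_supersetsCard.1 hS
  refine mem_filter.2 ⟨mem_powersetCard.2 ⟨subset_univ _, card_sdiff_of_subset hWS⟩, ?_⟩
  calc (#{f ∈ link E D | f ⊆ S \ W} : ℝ) ≤ #{e ∈ E | D ⊆ e ∧ e ⊆ S} :=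
        mod_cast card_link_filter_subset_sdiff_le hDW hWS
    _ < c := hlt
    _ ≤ _ := hc

end Link

section Estimates

lemma one_sub_mul_pow_le_pow_sub {x c t : ℕ} {γ : ℝ} (hcx : c ≤ x) (hγ : 0 ≤ γ)
    (h : (t * c : ℝ) ≤ γ * x) : (1 - γ) * (x : ℝ) ^ t ≤ ((x - c : ℕ) : ℝ) ^ t := by
  obtain rfl | hx := x.eq_zero_or_pos
  · obtain rfl : c = 0 := by omega
    exact mul_le_of_le_one_left (by positivity) (by linarith)
  have hx' : (0 : ℝ) < x := mod_cast hx
  have ratio_le_one : (c : ℝ) / x ≤ 1 := (div_le_one hx').2 (mod_cast hcx)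
  have mul_ratio_le : (t : ℝ) * (c / x) ≤ γ := by rwa [← mul_div_assoc, div_le_iff₀ hx']
  calc (1 - γ) * (x : ℝ) ^ t ≤ (1 + t * (-(c / x))) * (x : ℝ) ^ t := by gcongr; linarith
    _ ≤ (1 + (-(c / x))) ^ t * (x : ℝ) ^ t := by
        gcongr
        exact one_add_mul_le_pow (by linarith) t
    _ = ((x - c : ℕ) : ℝ) ^ t := by
        rw [← mul_pow, Nat.cast_sub hcx]
        field_simp
        ring

lemma sub_mul_pow_le_mul_descFactorial {x w t : ℕ} {β γ : ℝ} (hβ : 0 ≤ β) (hβ_one : β ≤ 1)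
    (hγ : 0 ≤ γ) (hwx : w + t ≤ x) (h : (t * (w + t) : ℝ) ≤ γ * x) :
    (β - γ) * (x : ℝ) ^ t ≤ β * (x - w).descFactorial t := by
  calc (β - γ) * (x : ℝ) ^ t ≤ β * ((1 - γ) * (x : ℝ) ^ t) := by
        rw [← mul_assoc]
        gcongr
        nlinarith
    _ ≤ β * ((x - (w + t) : ℕ) : ℝ) ^ t := by
        gcongr
        exact one_sub_mul_pow_le_pow_sub hwx hγ (mod_cast h)
    _ ≤ β * (x - w).descFactorial t := by
        gcongr
        exact_mod_cast (Nat.pow_le_pow_left (by omega : x - (w + t) ≤ x - w + 1 - t) t).trans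
          (Nat.pow_sub_le_descFactorial (x - w) t)

lemma sub_mul_choose_le_mul_choose {x v w t : ℕ} {β γ : ℝ} (hβγ : γ ≤ β) (hβ_one : β ≤ 1)
    (hγ : 0 ≤ γ) (hwx : w + t ≤ x) (h : (t * (w + t) : ℝ) ≤ γ * x) :
    (β - γ) * ((x - v).choose t : ℝ) ≤ β * (x - w).choose t := by
  refine le_of_mul_le_mul_left ?_ (by positivity : (0 : ℝ) < t !)
  calc (t ! : ℝ) * ((β - γ) * (x - v).choose t) = (β - γ) * (x - v).descFactorial t := by
        rw [Nat.descFactorial_eq_factorial_mul_choose]; push_cast; ring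
    _ ≤ (β - γ) * (x : ℝ) ^ t := by
        have : 0 ≤ β - γ := sub_nonneg.2 hβγ
        gcongr
        exact_mod_cast (Nat.descFactorial_le_pow _ t).trans (Nat.pow_le_pow_left (x.sub_le v) t)
    _ ≤ β * (x - w).descFactorial t :=
        sub_mul_pow_le_mul_descFactorial (hγ.trans hβγ) hβ_one hγ hwx h
    _ = t ! * (β * (x - w).choose t) := by
        rw [Nat.descFactorial_eq_factorial_mul_choose]; push_cast; ring

lemma pow_le_two_mul_factorial_mul_choose {x w m : ℕ} (h : 2 * (w + m) ^ 2 ≤ x) :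
    (x : ℝ) ^ m ≤ 2 * (m ! * (x - w).choose m) := by
  have hm : (m * (w + m) : ℝ) ≤ 1 / 2 * x := by
    have : (2 * (w + m) ^ 2 : ℝ) ≤ x := mod_cast h
    nlinarith [mul_nonneg w.cast_nonneg (w + m : ℕ).cast_nonneg (α := ℝ)]
  have := sub_mul_pow_le_mul_descFactorial zero_le_one le_rfl (by norm_num) (by nlinarith) hm
  rw [Nat.descFactorial_eq_factorial_mul_choose] at this
  push_cast at this
  linarith

lemma div_two_mul_le_sub_div {s w t : ℕ} (ht : 0 < t) (h : 2 * (w + t) ≤ s) :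
    (s / (2 * t) : ℝ) ≤ ((s - w) / t : ℕ) := by
  have : s ≤ ((s - w) / t) * (2 * t) := by
    have := Nat.lt_mul_div_succ (s - w) ht
    grind
  rw [div_le_iff₀ (by positivity)]
  exact_mod_cast this

open Filter in
lemma eventually_choose_mul_exp_le_exp_neg_sqrt (d : ℕ) {c : ℝ} (hc : 0 < c) :
    ∀ᶠ s : ℕ in atTop,
      s.choose d * (2 * Real.exp (-(c * s))) ≤ Real.exp (-√s) := by
  have tendsto : Tendsto (fun s : ℕ ↦ (c / 2 * s) ^ d * Real.exp (-(c / 2 * s))) atTop (nhds 0) :=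
    (Real.tendsto_pow_mul_exp_neg_atTop_nhds_zero d).comp <|
      tendsto_natCast_atTop_atTop.const_mul_atTop (by positivity)
  filter_upwards [tendsto.eventually_le_const (by positivity : 0 < (c / 2) ^ d / 2),
    tendsto_natCast_atTop_atTop.eventually_ge_atTop (4 / c ^ 2)] with s h_decay hs
  have polynomial_absorbed : (s : ℝ) ^ d * 2 * Real.exp (-(c / 2 * s)) ≤ 1 := by
    refine le_of_mul_le_mul_left ?_ (by positivity : 0 < (c / 2) ^ d)
    rw [mul_pow] at h_decay
    linarith
  have sqrt_le : √s ≤ c / 2 * s := by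
    rw [Real.sqrt_le_left (by positivity)]
    rw [div_le_iff₀ (by positivity)] at hs
    nlinarith [Nat.cast_nonneg (α := ℝ) s]
  calc (s.choose d : ℝ) * (2 * Real.exp (-(c * s)))
      ≤ (s : ℝ) ^ d * (2 * Real.exp (-(c * s))) := by
        gcongr
        exact_mod_cast Nat.choose_le_pow s d
    _ = (s : ℝ) ^ d * 2 * Real.exp (-(c / 2 * s)) * Real.exp (-(c / 2 * s)) := by
        rw [mul_assoc _ (Real.exp _), ← Real.exp_add, mul_assoc]
        ring_nf
    _ ≤ 1 * Real.exp (-√s) := by gcongr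
    _ = Real.exp (-√s) := one_mul _

end Estimates

section InducedDegree

variable {V : Type*} [Fintype V] [DecidableEq V]

lemma le_one_of_mul_choose_le_degree {E : Finset (Finset V)} {D : Finset V} {t : ℕ} {β : ℝ}
    (hE : (E : Set (Finset V)).Sized (#D + t)) (hD : #D + t ≤ Fintype.card V)
    (hdeg : β * (Fintype.card V - #D).choose t ≤ #{e ∈ E | D ⊆ e}) : β ≤ 1 := by
  have choose_pos : (0 : ℝ) < (Fintype.card V - #D).choose t :=
    mod_cast Nat.choose_pos (by omega)
  refine le_of_mul_le_mul_right (hdeg.trans ?_) choose_pos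
  rw [one_mul]
  exact_mod_cast card_filter_subset_le_choose hE

lemma sub_mul_pow_le_card_link_mul_factorial {E : Finset (Finset V)} {D : Finset V} {t : ℕ}
    {β γ : ℝ} (hE : (E : Set (Finset V)).Sized (#D + t)) (hβ : 0 ≤ β) (hγ : 0 ≤ γ)
    (hdeg : β * (Fintype.card V - #D).choose t ≤ #{e ∈ E | D ⊆ e})
    (hD : #D + t ≤ Fintype.card V) (hn : (t * (#D + t) : ℝ) ≤ γ * Fintype.card V) :
    (β - γ) * (Fintype.card V : ℝ) ^ t ≤ #(link E D) * t ! := by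
  calc (β - γ) * (Fintype.card V : ℝ) ^ t ≤ β * (Fintype.card V - #D).descFactorial t :=
        sub_mul_pow_le_mul_descFactorial hβ (le_one_of_mul_choose_le_degree hE hD hdeg) hγ hD hn
    _ = β * (Fintype.card V - #D).choose t * t ! := by
        rw [Nat.descFactorial_eq_factorial_mul_choose]
        push_cast
        ring
    _ ≤ #(link E D) * t ! := by
        rw [card_link]
        gcongr

/-- Each `γ` in `β - 3 * γ` pays for one loss: the normalisation `n ^ t / t !` of the density of
the link, the deviation from the mean, and the passage from `S \ W` to `S \ D`. -/
theorem card_filter_degree_lt_le {E : Finset (Finset V)} {D W : Finset V} {s t : ℕ} {β γ : ℝ}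
    (hE : (E : Set (Finset V)).Sized (#D + t)) (ht : 0 < t) (hγ : 0 ≤ γ) (hDW : D ⊆ W)
    (hdeg : β * (Fintype.card V - #D).choose t ≤ #{e ∈ E | D ⊆ e})
    (hs : 2 * (#W + t) ≤ s) (hsγ : (t * (#W + t) : ℝ) ≤ γ * s)
    (hn : 2 * s ^ 2 ≤ Fintype.card V) (hnγ : (t * (#D + t) : ℝ) ≤ γ * Fintype.card V) :
    (#{S ∈ supersetsCard W s |
        (#{e ∈ E | D ⊆ e ∧ e ⊆ S} : ℝ) < (β - 3 * γ) * (s - #D).choose t} : ℝ) ≤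
      2 * Real.exp (-(γ ^ 2 / (4 * t) * s)) * #(supersetsCard W s) := by
  obtain hβ | hβ := le_total β (3 * γ)
  · rw [filter_false_of_mem, card_empty, Nat.cast_zero]
    · positivity
    · intro S _
      refine not_lt.2 (le_trans ?_ (Nat.cast_nonneg _))
      exact mul_nonpos_of_nonpos_of_nonneg (by linarith) (Nat.cast_nonneg _)
  set m := s - #W
  have hDn : #D + t ≤ Fintype.card V := by nlinarith [card_le_card hDW]
  have hβ_one : β ≤ 1 := le_one_of_mul_choose_le_degree hE hDn hdeg
  have threshold : (β - 3 * γ) * ((s - #D).choose t : ℝ) ≤ (β - γ - γ) * m.choose t := by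
    rw [show β - 3 * γ = β - γ - γ - γ by ring]
    exact sub_mul_choose_le_mul_choose (by linarith) (by linarith) hγ (by omega) hsγ
  have exponent : γ ^ 2 / (4 * t) * s ≤ (m / t : ℕ) * (γ ^ 2 / 2) := by
    calc γ ^ 2 / (4 * t) * s = s / (2 * t) * (γ ^ 2 / 2) := by ring
      _ ≤ (m / t : ℕ) * (γ ^ 2 / 2) := by gcongr; exact div_two_mul_le_sub_div ht hs
  refine le_of_mul_le_mul_right ?_ (by positivity : (0 : ℝ) < m !)
  calc _ ≤ (#(sparseSets (link E D) t m (β - γ - γ)) * m ! : ℝ) := by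
        refine mul_le_mul_of_nonneg_right ?_ (by positivity)
        exact_mod_cast card_filter_degree_lt_le_card_sparseSets hDW threshold
    _ ≤ (Fintype.card V : ℝ) ^ m * Real.exp (-((m / t : ℕ) * (γ ^ 2 / 2))) :=
        card_sparseSets_mul_factorial_le (sized_link hE) m (by linarith) (by linarith) hγ
          (sub_mul_pow_le_card_link_mul_factorial hE (by linarith) hγ hdeg hDn hnγ)
    _ ≤ 2 * (m ! * (Fintype.card V - #W).choose m) * Real.exp (-(γ ^ 2 / (4 * t) * s)) := by
        gcongr
        exact pow_le_two_mul_factorial_mul_choose (by rwa [Nat.add_sub_of_le (by omega)])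
    _ = _ := by
        rw [card_supersetsCard (by omega)]
        ring

theorem one_sub_mul_choose_le_card_filter_le_degree {E : Finset (Finset V)} {R : Finset V}
    {d s t : ℕ} {β γ : ℝ}
    (hE : (E : Set (Finset V)).Sized (d + t)) (ht : 0 < t) (hγ : 0 ≤ γ)
    (hdeg : ∀ D, #D = d → β * (Fintype.card V - d).choose t ≤ #{e ∈ E | D ⊆ e})
    (hs : 2 * (#R + d + t) ≤ s) (hsγ : (t * (#R + d + t) : ℝ) ≤ γ * s)
    (hn : 2 * s ^ 2 ≤ Fintype.card V) (hnγ : (t * (d + t) : ℝ) ≤ γ * Fintype.card V) :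
    (1 - s.choose d * (2 * Real.exp (-(γ ^ 2 / (4 * t) * s)))) *
        (Fintype.card V - #R).choose (s - #R) ≤
      (#{S ∈ supersetsCard R s | ∀ D ∈ powersetCard d S,
        (β - 3 * γ) * (s - d).choose t ≤ (#{e ∈ E | D ⊆ e ∧ e ⊆ S} : ℝ)} : ℝ) := by
  rw [← card_supersetsCard (by omega)]
  refine one_sub_mul_card_supersetsCard_le fun D hD ↦ ?_
  subst hD
  have card_union : #(R ∪ D) ≤ #R + #D := card_union_le R D
  simp only [not_le]
  refine card_filter_degree_lt_le hE ht hγ subset_union_right (hdeg D rfl) (by omega) ?_ hn hnγ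
  refine le_trans ?_ hsγ
  gcongr
  exact_mod_cast card_union

end InducedDegree

open Filter in
theorem stmt_15_general (k d r : ℕ) (hdk : d < k) (ε : ℝ) (hε : 0 < ε) :
    ∃ s0 : ℕ, k + r ≤ s0 ∧ ∀ s : ℕ, s0 ≤ s → ∃ n0 : ℕ, ∀ n : ℕ, n0 ≤ n → ∀ δ : ℝ,
    ∀ (V : Type*) [Fintype V] [DecidableEq V], Fintype.card V = n →
    ∀ E : Finset (Finset V), (∀ e ∈ E, #e = k) →
    (∀ D : Finset V, #D = d →
      (δ + ε) * ((n - d).choose (k - d) : ℝ) ≤ (#{e ∈ E | D ⊆ e} : ℝ)) →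
    ∀ R : Finset V, #R = r →
      (1 - Real.exp (-√s)) * ((n - r).choose (s - r) : ℝ) ≤
        ({S : Finset V | #S = s ∧ R ⊆ S ∧ ∀ D : Finset V, D ⊆ S → #D = d →
          (δ + ε / 2) * ((s - d).choose (k - d) : ℝ) ≤
            (#{e ∈ E | D ⊆ e ∧ e ⊆ S} : ℝ)}.ncard : ℝ) := by
  obtain ⟨t, rfl⟩ := Nat.exists_eq_add_of_le hdk.le
  have ht : 0 < t := by omega
  rw [Nat.add_sub_cancel_left]
  set γ := ε / 6 with hγ
  have eventually_le_mul (x : ℝ) : ∀ᶠ i : ℕ in atTop, x ≤ γ * i :=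
    (tendsto_natCast_atTop_atTop.const_mul_atTop (by positivity)).eventually_ge_atTop x
  obtain ⟨s0, hs0⟩ := eventually_atTop.1 <|
    (eventually_choose_mul_exp_le_exp_neg_sqrt d (by positivity : 0 < γ ^ 2 / (4 * t))).and <|
      (eventually_le_mul (t * (r + d + t))).and <| eventually_ge_atTop (2 * (r + d + t))
  refine ⟨s0 + (d + t + r), Nat.le_add_left .., fun s hs ↦ ?_⟩
  obtain ⟨h_tail, hsγ, hs_large⟩ := hs0 s (by omega)
  obtain ⟨n0, hn0⟩ := eventually_atTop.1 <|
    (eventually_le_mul (t * (d + t))).and <| eventually_ge_atTop (2 * s ^ 2)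
  refine ⟨n0, fun n hn δ V _ _ hV E hE hdeg R hR ↦ ?_⟩
  subst hV hR
  obtain ⟨hnγ, hn_large⟩ := hn0 _ hn
  calc _ ≤ (1 - s.choose d * (2 * Real.exp (-(γ ^ 2 / (4 * t) * s)))) *
        ((Fintype.card V - #R).choose (s - #R) : ℝ) := by gcongr
    _ ≤ _ := one_sub_mul_choose_le_card_filter_le_degree (fun e he ↦ hE e he) ht
        (by positivity) hdeg hs_large hsγ hn_large hnγ
    _ = _ := by
        rw [show δ + ε - 3 * γ = δ + ε / 2 by rw [hγ]; ring, ← Set.ncard_coe_finset]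
        congr 2
        ext S
        simp [mem_powersetCard, and_assoc]

/-- For all `2 ≤ k`, `1 ≤ d < k`, `r ≥ 1` and `ε > 0` there is `s0 ≥ k + r`
such that for every `s ≥ s0` there is `n0` such that for all `n ≥ n0` and all `δ ≥ 0`: if `G`
is a `k`-graph on an `n`-element vertex set with `δ_d(G) ≥ (δ+ε)·C(n−d,k−d)`, then for every
`r`-element vertex set `R`, the number of `s`-element vertex sets `S ⊇ R` with
`δ_d(G[S]) ≥ (δ+ε/2)·C(s−d,k−d)` is at least `(1 − e^{−√s})·C(n−r,s−r)`. -/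
theorem stmt_15 (k d r : ℕ) (hk : 2 ≤ k) (hd : 1 ≤ d) (hdk : d < k) (hr : 1 ≤ r)
    (ε : ℝ) (hε : 0 < ε) :
    ∃ s0 : ℕ, k + r ≤ s0 ∧ ∀ s : ℕ, s0 ≤ s → ∃ n0 : ℕ, ∀ n : ℕ, n0 ≤ n →
    ∀ δ : ℝ, 0 ≤ δ →
    ∀ (V : Type) [Fintype V] [DecidableEq V], Fintype.card V = n →
    ∀ E : Finset (Finset V), (∀ e ∈ E, e.card = k) →
    (∀ D : Finset V, D.card = d →
      (δ + ε) * ((n - d).choose (k - d) : ℝ) ≤ ((E.filter (fun e => D ⊆ e)).card : ℝ)) →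
    ∀ R : Finset V, R.card = r →
      (1 - Real.exp (-Real.sqrt s)) * ((n - r).choose (s - r) : ℝ) ≤
        (({S : Finset V | S.card = s ∧ R ⊆ S ∧
            ∀ D : Finset V, D ⊆ S → D.card = d →
              (δ + ε/2) * ((s - d).choose (k - d) : ℝ) ≤
                ((E.filter (fun e => D ⊆ e ∧ e ⊆ S)).card : ℝ)} :
          Set (Finset V)).ncard : ℝ) := by
  obtain ⟨s0, hs0, h⟩ := stmt_15_general k d r hdk ε hε
  exact ⟨s0, hs0, fun s hs ↦ (h s hs).imp fun n0 h n hn δ _ ↦ h n hn δ⟩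
end

section
/- Let V be a finite set of size n, let 1 ≤ s ≤ n, let h be a real-valued function on the s-element subsets of V, and let K > 0 be such that |h(S) − h(S')| ≤ K for all s-element subsets S, S' ⊆ V with |S ∩ S'| = s − 1. Let μ be the average of h over all s-element subsets of V, i.e. μ = (∑_S h(S)) / binom(n,s). Then for every real ℓ > 0, the number of s-element subsets S ⊆ V with |h(S) − μ| ≥ ℓ is at most 2·exp(−ℓ²/(2·min{s, n−s}·K²))·binom(n,s). -/
/-!
Draw a random `s`-subset by first choosing one of its points `v` uniformly and then the remaining
`s - 1` points. Exchanging `v` and `w` by a transposition moves each subset by at most one swap, so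
the conditional averages of `h` given `v` lie within `K` of one another, and Hoeffding's lemma
bounds the exponential moments of this first choice. Induction on `s` gives `h` the sub-Gaussian
variance proxy `s * (K / 2) ^ 2`. Complementation replaces `s` by `n - s`, and the Chernoff bound
applied to the better of the two yields the tail estimate.
-/

open Finset MeasureTheory ProbabilityTheory
open scoped BigOperators NNReal

section UniformMeasure

variable {Ω ι : Type*} {mΩ : MeasurableSpace Ω} {μ : Measure Ω} {X : Ω → ℝ} {c : ℝ≥0} {ε : ℝ}

lemma measureReal_abs_ge_le_of_hasSubgaussianMGF (hX : HasSubgaussianMGF X c μ) (hε : 0 ≤ ε) :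
    μ.real {ω | ε ≤ |X ω|} ≤ 2 * Real.exp (-ε ^ 2 / (2 * c)) := by
  have h_union : {ω | ε ≤ |X ω|} = {ω | ε ≤ X ω} ∪ {ω | ε ≤ (-X) ω} := by
    ext ω
    exact le_abs (a := ε) (b := X ω)
  calc μ.real {ω | ε ≤ |X ω|}
      ≤ μ.real {ω | ε ≤ X ω} + μ.real {ω | ε ≤ (-X) ω} := h_union ▸ measureReal_union_le _ _
    _ ≤ 2 * Real.exp (-ε ^ 2 / (2 * c)) := by
      linarith [hX.measure_ge_le hε, hX.neg.measure_ge_le hε]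

variable [MeasurableSpace ι] [MeasurableSingletonClass ι] (A : Finset ι) (f : ι → ℝ)

lemma restrict_uniformOn_self :
    (uniformOn (A : Set ι)).restrict (A : Set ι) = uniformOn (A : Set ι) :=
  Measure.restrict_eq_self_of_ae_mem (ae_cond_mem A.measurableSet)

lemma integrable_uniformOn_finset : Integrable f (uniformOn (A : Set ι)) := by
  rw [← restrict_uniformOn_self]
  exact IntegrableOn.finset

lemma measureReal_uniformOn_finset (p : ι → Prop) [DecidablePred p] :
    (uniformOn (A : Set ι)).real {i | p i} = (#{i ∈ A | p i} : ℝ) / #A := by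
  classical
  have h_event : (A : Set ι) ∩ {i | p i} = ({i ∈ A | p i} : Finset ι) := (coe_filter p A).symm
  rw [measureReal_def, ← uniformOn_inter_self A.finite_toSet, h_event, uniformOn_apply_finset,
    inter_eq_right.2 (filter_subset p A), ENNReal.toReal_div, ENNReal.toReal_natCast,
    ENNReal.toReal_natCast]

lemma integral_uniformOn_finset : ∫ i, f i ∂uniformOn (A : Set ι) = 𝔼 i ∈ A, f i := by
  classical
  have h_mass : ∀ i ∈ A, (uniformOn (A : Set ι)).real {i} • f i = f i / #A := by
    intro i hi
    rw [← coe_singleton, measureReal_def, uniformOn_apply_finset, inter_singleton_of_mem hi]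
    simp [div_eq_inv_mul]
  rw [← restrict_uniformOn_self, setIntegral_finset A IntegrableOn.finset, sum_congr rfl h_mass,
    expect_eq_sum_div_card, sum_div]

lemma hasSubgaussianMGF_uniformOn_iff :
    HasSubgaussianMGF f c (uniformOn (A : Set ι)) ↔
      ∀ t : ℝ, 𝔼 i ∈ A, Real.exp (t * f i) ≤ Real.exp (c * t ^ 2 / 2) := by
  simp only [← integral_uniformOn_finset]
  exact ⟨HasSubgaussianMGF.mgf_le, fun h ↦ ⟨fun _ ↦ integrable_uniformOn_finset A _, h⟩⟩

end UniformMeasure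

section FiniteAverages

variable {ι : Type*} {A : Finset ι} {f : ι → ℝ}

lemma expect_exp_mul_sub_expect_le_of_abs_sub_le {K : ℝ≥0}
    (hf : ∀ i ∈ A, ∀ j ∈ A, |f i - f j| ≤ K) (t : ℝ) :
    𝔼 i ∈ A, Real.exp (t * (f i - 𝔼 j ∈ A, f j)) ≤ Real.exp (((K / 2) ^ 2 : ℝ≥0) * t ^ 2 / 2) := by
  rcases A.eq_empty_or_nonempty with rfl | hA
  · simpa using Real.exp_nonneg _
  let _ : MeasurableSpace ι := ⊤
  have : IsProbabilityMeasure (uniformOn (A : Set ι)) :=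
    isProbabilityMeasure_uniformOn A.finite_toSet hA
  obtain ⟨i₀, hi₀, hmin⟩ := A.exists_min_image f hA
  have hmem : ∀ᵐ i ∂uniformOn (A : Set ι), f i ∈ Set.Icc (f i₀) (f i₀ + K) := by
    filter_upwards [ae_cond_mem A.measurableSet] with i hi
    exact ⟨hmin i hi, by linarith [le_abs_self (f i - f i₀), hf i hi i₀ hi₀]⟩
  have hsub := hasSubgaussianMGF_of_mem_Icc measurable_from_top.aemeasurable hmem
  rw [integral_uniformOn_finset, hasSubgaussianMGF_uniformOn_iff] at hsub
  simpa using hsub t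

lemma card_filter_abs_ge_le {c : ℝ≥0} {ε : ℝ}
    (hf : ∀ t : ℝ, 𝔼 i ∈ A, Real.exp (t * f i) ≤ Real.exp (c * t ^ 2 / 2)) (hε : 0 ≤ ε) :
    (#{i ∈ A | ε ≤ |f i|} : ℝ) ≤ 2 * Real.exp (-ε ^ 2 / (2 * c)) * #A := by
  rcases A.eq_empty_or_nonempty with rfl | hA
  · simp
  let _ : MeasurableSpace ι := ⊤
  have h_tail := measureReal_abs_ge_le_of_hasSubgaussianMGF
    ((hasSubgaussianMGF_uniformOn_iff A f).2 hf) hε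
  rwa [measureReal_uniformOn_finset, div_le_iff₀ (by exact_mod_cast hA.card_pos)] at h_tail

end FiniteAverages

section RandomSubsets

variable {V : Type*} [DecidableEq V]

lemma sum_sum_powersetCard_erase_insert {M : Type*} [AddCommMonoid M] (A : Finset V) (s : ℕ)
    (f : Finset V → M) :
    ∑ v ∈ A, ∑ T ∈ (A.erase v).powersetCard s, f (insert v T) =
      (s + 1) • ∑ S ∈ A.powersetCard (s + 1), f S := by
  have h_count : (s + 1) • ∑ S ∈ A.powersetCard (s + 1), f S =
      ∑ S ∈ A.powersetCard (s + 1), ∑ _v ∈ S, f S := by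
    rw [← sum_nsmul]
    refine sum_congr rfl fun S hS ↦ ?_
    rw [sum_const, (mem_powersetCard.1 hS).2]
  rw [h_count, sum_sigma', sum_sigma']
  refine sum_bij' (fun x _ ↦ ⟨insert x.1 x.2, x.1⟩) (fun x _ ↦ ⟨x.2, x.1.erase x.2⟩) ?_ ?_ ?_ ?_ ?_
  · simp only [mem_sigma, mem_powersetCard, subset_erase]
    grind
  · simp only [mem_sigma, mem_powersetCard, subset_erase]
    grind
  · rintro ⟨v, T⟩ hx
    simp only [mem_sigma, mem_powersetCard, subset_erase] at hx
    rw [erase_insert hx.2.1.2]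
  · rintro ⟨S, v⟩ hx
    rw [insert_erase (mem_sigma.1 hx).2]
  · exact fun _ _ ↦ rfl

lemma expect_expect_powersetCard_erase_insert {M : Type*} [AddCommMonoid M] [Module ℚ≥0 M]
    (A : Finset V) (s : ℕ) (f : Finset V → M) :
    𝔼 v ∈ A, 𝔼 T ∈ (A.erase v).powersetCard s, f (insert v T) =
      𝔼 S ∈ A.powersetCard (s + 1), f S := by
  have h_card : (#A : ℚ≥0) * (#A - 1).choose s = (#A).choose (s + 1) * (s + 1) := by
    cases #A with
    | zero => simp
    | succ n => exact_mod_cast Nat.add_one_mul_choose_eq n s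
  have h_inner : ∀ v ∈ A, 𝔼 T ∈ (A.erase v).powersetCard s, f (insert v T) =
      ((#A - 1).choose s : ℚ≥0)⁻¹ • ∑ T ∈ (A.erase v).powersetCard s, f (insert v T) :=
    fun v hv ↦ by rw [expect, card_powersetCard, card_erase_of_mem hv]
  rw [expect_congr rfl h_inner, expect, ← smul_sum, sum_sum_powersetCard_erase_insert, expect,
    card_powersetCard, ← Nat.cast_smul_eq_nsmul ℚ≥0, smul_smul, smul_smul, ← mul_inv, mul_comm,
    h_card]
  congr 1
  push_cast
  field_simp

lemma expect_powersetCard_compl [Fintype V] {M : Type*} [AddCommMonoid M] [Module ℚ≥0 M] {s : ℕ}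
    (hs : s ≤ Fintype.card V) (f : Finset V → M) :
    𝔼 S ∈ univ.powersetCard (Fintype.card V - s), f Sᶜ = 𝔼 S ∈ univ.powersetCard s, f S := by
  refine expect_nbij' compl compl ?_ ?_ (fun S _ ↦ compl_compl S) (fun S _ ↦ compl_compl S)
    (fun _ _ ↦ rfl)
  · simp only [mem_powersetCard_univ, card_compl]
    omega
  · simp only [mem_powersetCard_univ, card_compl]
    omega

lemma map_swap_erase {A : Finset V} {v w : V} (hv : v ∈ A) (hw : w ∈ A) :
    (A.erase v).map (Equiv.swap v w).toEmbedding = A.erase w := by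
  have hA : A.map (Equiv.swap v w).toEmbedding = A := by
    refine map_perm fun x hx ↦ ?_
    rcases Equiv.swap_apply_ne_self_iff.1 hx |>.2 with rfl | rfl <;> assumption
  rw [map_erase, hA, Equiv.coe_toEmbedding, Equiv.swap_apply_left]

lemma sdiff_map_swap_subset {S : Finset V} {v : V} (hv : v ∈ S) (w : V) :
    S \ S.map (Equiv.swap v w).toEmbedding ⊆ {v} := by
  intro x
  simp only [mem_sdiff, mem_map_equiv, Equiv.symm_swap, mem_singleton, Equiv.swap_apply_def]
  grind

end RandomSubsets

/-- `h` is `K`-Lipschitz on the `s`-element subsets of `A`, for the distance of the Johnson graph: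
subsets that differ by exchanging one element have values within `K`. As both subsets have `s`
elements, adjacency amounts to `#(S \ S') = 1`, which unlike `#(S ∩ S') = s - 1` involves no
truncated subtraction. -/
def IsJohnsonLipschitz {V : Type*} [DecidableEq V] (K : ℝ≥0) (A : Finset V) (s : ℕ)
    (h : Finset V → ℝ) : Prop :=
  ∀ S ∈ A.powersetCard s, ∀ S' ∈ A.powersetCard s, #(S \ S') = 1 → |h S - h S'| ≤ K

namespace IsJohnsonLipschitz

variable {V : Type*} [DecidableEq V] {K : ℝ≥0} {A : Finset V} {s : ℕ} {h : Finset V → ℝ} {v w : V}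

lemma comp_insert (hh : IsJohnsonLipschitz K A (s + 1) h) (hv : v ∈ A) :
    IsJohnsonLipschitz K (A.erase v) s (fun T ↦ h (insert v T)) := by
  have insert_mem : ∀ T ∈ (A.erase v).powersetCard s, insert v T ∈ A.powersetCard (s + 1) := by
    simp only [mem_powersetCard, subset_erase]
    grind
  intro T hT T' hT' hTT'
  refine hh _ (insert_mem T hT) _ (insert_mem T' hT') ?_
  have hvT : v ∉ T := (subset_erase.1 (mem_powersetCard.1 hT).1).2
  rwa [insert_sdiff_insert, sdiff_insert_of_notMem hvT]

lemma comp_compl [Fintype V] (hh : IsJohnsonLipschitz K univ s h) (hs : s ≤ Fintype.card V) :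
    IsJohnsonLipschitz K univ (Fintype.card V - s) (fun S ↦ h Sᶜ) := by
  intro S hS S' hS' hSS'
  rw [mem_powersetCard_univ] at hS hS'
  refine hh _ ?_ _ ?_ ?_
  · rw [mem_powersetCard_univ, card_compl]
    omega
  · rw [mem_powersetCard_univ, card_compl]
    omega
  · rwa [compl_sdiff_compl, card_sdiff_comm (hS'.trans hS.symm)]

lemma abs_sub_map_swap_le (hh : IsJohnsonLipschitz K A s h) (hw : w ∈ A) {S : Finset V}
    (hS : S ∈ A.powersetCard s) (hv : v ∈ S) :
    |h S - h (S.map (Equiv.swap v w).toEmbedding)| ≤ K := by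
  set S' := S.map (Equiv.swap v w).toEmbedding with hS'
  have hcard : #S' = #S := card_map _
  have hdiff : S \ S' ⊆ {v} := sdiff_map_swap_subset hv w
  rcases subset_singleton_iff.1 hdiff with hempty | hsingle
  · have heq : S = S' := eq_of_subset_of_card_le (sdiff_eq_empty_iff_subset.1 hempty) hcard.le
    rw [← heq, sub_self, abs_zero]
    exact K.2
  · refine hh S hS S' (mem_powersetCard.2 ⟨?_, hcard.trans (mem_powersetCard.1 hS).2⟩) ?_
    · have hSA := (mem_powersetCard.1 hS).1
      intro x
      simp only [hS', mem_map_equiv, Equiv.symm_swap, Equiv.swap_apply_def]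
      grind
    · rw [hsingle, card_singleton]

lemma abs_expect_insert_sub_le (hh : IsJohnsonLipschitz K A (s + 1) h) (hv : v ∈ A) (hw : w ∈ A) :
    |𝔼 T ∈ (A.erase v).powersetCard s, h (insert v T) -
      𝔼 T ∈ (A.erase w).powersetCard s, h (insert w T)| ≤ K := by
  let σ := (Equiv.swap v w).toEmbedding
  have h_swap : 𝔼 T ∈ (A.erase w).powersetCard s, h (insert w T) =
      𝔼 T ∈ (A.erase v).powersetCard s, h ((insert v T).map σ) := by
    rw [← map_swap_erase hv hw, powersetCard_map]
    simp only [expect_eq_sum_div_card, sum_map, card_map, map_insert, σ, Equiv.coe_toEmbedding,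
      Equiv.swap_apply_left]
    rfl
  rw [h_swap, ← expect_sub_distrib]
  rcases ((A.erase v).powersetCard s).eq_empty_or_nonempty with hempty | hne
  · simp [hempty]
  refine (abs_expect_le _ _).trans (expect_le hne fun T hT ↦ ?_)
  refine hh.abs_sub_map_swap_le hw ?_ (mem_insert_self v T)
  simp only [mem_powersetCard, subset_erase] at hT ⊢
  grind

theorem expect_exp_mul_sub_expect_le (hh : IsJohnsonLipschitz K A s h) (t : ℝ) :
    𝔼 S ∈ A.powersetCard s, Real.exp (t * (h S - 𝔼 S' ∈ A.powersetCard s, h S')) ≤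
      Real.exp ((s * (K / 2) ^ 2 : ℝ≥0) * t ^ 2 / 2) := by
  induction s generalizing A h with
  | zero => simp
  | succ s ih =>
    set m := 𝔼 S ∈ A.powersetCard (s + 1), h S
    let g : V → ℝ := fun v ↦ 𝔼 T ∈ (A.erase v).powersetCard s, h (insert v T)
    have hg_mean : 𝔼 v ∈ A, g v = m := expect_expect_powersetCard_erase_insert A s h
    have h_first := expect_exp_mul_sub_expect_le_of_abs_sub_le (f := g)
      (fun v hv w hw ↦ hh.abs_expect_insert_sub_le hv hw) t
    rw [hg_mean] at h_first
    calc 𝔼 S ∈ A.powersetCard (s + 1), Real.exp (t * (h S - m))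
        = 𝔼 v ∈ A, 𝔼 T ∈ (A.erase v).powersetCard s,
            Real.exp (t * (h (insert v T) - g v)) * Real.exp (t * (g v - m)) := by
          rw [← expect_expect_powersetCard_erase_insert]
          simp only [← Real.exp_add, ← mul_add, sub_add_sub_cancel]
      _ ≤ 𝔼 v ∈ A, Real.exp ((s * (K / 2) ^ 2 : ℝ≥0) * t ^ 2 / 2) * Real.exp (t * (g v - m)) := by
          refine expect_le_expect fun v hv ↦ ?_
          rw [← expect_mul]
          gcongr
          exact ih (hh.comp_insert hv)
      _ ≤ Real.exp ((s * (K / 2) ^ 2 : ℝ≥0) * t ^ 2 / 2) *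
            Real.exp (((K / 2) ^ 2 : ℝ≥0) * t ^ 2 / 2) := by
          rw [← mul_expect]
          gcongr
      _ = Real.exp (((s + 1 : ℕ) * (K / 2) ^ 2 : ℝ≥0) * t ^ 2 / 2) := by
          rw [← Real.exp_add]
          push_cast
          ring_nf

theorem expect_exp_mul_sub_expect_univ_le [Fintype V] (hh : IsJohnsonLipschitz K univ s h)
    (hs : s ≤ Fintype.card V) (t : ℝ) :
    𝔼 S ∈ univ.powersetCard s, Real.exp (t * (h S - 𝔼 S' ∈ univ.powersetCard s, h S')) ≤
      Real.exp (((min s (Fintype.card V - s) : ℕ) * (K / 2) ^ 2 : ℝ≥0) * t ^ 2 / 2) := by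
  rcases min_choice s (Fintype.card V - s) with hmin | hmin
  · rw [hmin]
    exact hh.expect_exp_mul_sub_expect_le t
  · have h_compl := (hh.comp_compl hs).expect_exp_mul_sub_expect_le t
    rwa [expect_powersetCard_compl hs h,
      expect_powersetCard_compl hs fun S ↦ Real.exp (t * (h S - _)), ← hmin] at h_compl

theorem card_filter_abs_sub_expect_ge_le [Fintype V] (hh : IsJohnsonLipschitz K univ s h)
    (hs : s ≤ Fintype.card V) {ε : ℝ} (hε : 0 ≤ ε) :
    (#{S ∈ univ.powersetCard s | ε ≤ |h S - 𝔼 S' ∈ univ.powersetCard s, h S'|} : ℝ) ≤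
      2 * Real.exp (-(2 * ε ^ 2) / ((min s (Fintype.card V - s) : ℕ) * K ^ 2)) *
        (Fintype.card V).choose s := by
  have h_tail := card_filter_abs_ge_le (hh.expect_exp_mul_sub_expect_univ_le hs) hε
  rw [card_powersetCard, card_univ] at h_tail
  generalize min s (Fintype.card V - s) = m at h_tail ⊢
  convert h_tail using 4
  push_cast
  ring

end IsJohnsonLipschitz

/-- Let `V` be an `n`-set, `1 ≤ s ≤ n`, `h` a real function on `s`-subsets of
`V` and `K > 0` with `|h S − h S'| ≤ K` whenever `|S ∩ S'| = s−1`. Let `μ` be the average of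
`h` over all `s`-subsets. Then for every `ℓ > 0`, the number of `s`-subsets `S` with
`|h S − μ| ≥ ℓ` is at most `2·exp(−ℓ²/(2·min{s, n−s}·K²))·C(n,s)`. -/
theorem stmt_16 {V : Type*} [Fintype V] [DecidableEq V] (n s : ℕ)
    (hn : Fintype.card V = n) (hs1 : 1 ≤ s) (hsn : s ≤ n)
    (h : Finset V → ℝ) (K : ℝ) (hK : 0 < K)
    (hLip : ∀ S S' : Finset V, S.card = s → S'.card = s → (S ∩ S').card = s - 1 →
      |h S - h S'| ≤ K)
    (μ : ℝ) (hμ : μ = (∑ S ∈ Finset.univ.powersetCard s, h S) / (n.choose s : ℝ))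
    (ℓ : ℝ) (hℓ : 0 < ℓ) :
    (({S : Finset V | S.card = s ∧ ℓ ≤ |h S - μ|} : Set (Finset V)).ncard : ℝ) ≤
      2 * Real.exp (-(ℓ^2) / (2 * ((min s (n - s) : ℕ) : ℝ) * K^2)) * (n.choose s : ℝ) := by
  lift K to ℝ≥0 using hK.le
  subst hn
  have hh : IsJohnsonLipschitz K univ s h := by
    intro S hS S' hS' hSS'
    rw [mem_powersetCard_univ] at hS hS'
    refine hLip S S' hS hS' ?_
    have := card_sdiff_add_card_inter S S'
    omega
  have hμ_expect : μ = 𝔼 S ∈ univ.powersetCard s, h S := by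
    rw [hμ, expect_eq_sum_div_card, card_powersetCard, card_univ]
  have h_event : {S : Finset V | S.card = s ∧ ℓ ≤ |h S - μ|} =
      ({S ∈ univ.powersetCard s | ℓ ≤ |h S - μ|} : Finset (Finset V)) := by
    ext S
    simp
  rw [h_event, Set.ncard_coe_finset, hμ_expect]
  refine (hh.card_filter_abs_sub_expect_ge_le hsn hℓ.le).trans ?_
  gcongr 2 * Real.exp ?_ * _
  generalize min s (Fintype.card V - s) = m
  have h_ratio_nonneg : 0 ≤ ℓ ^ 2 / (m * K ^ 2) := by positivity
  calc -(2 * ℓ ^ 2) / (m * K ^ 2)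
      = -(2 * (ℓ ^ 2 / (m * K ^ 2))) := by ring
    _ ≤ -(ℓ ^ 2 / (m * K ^ 2) / 2) := by linarith
    _ = -(ℓ ^ 2) / (2 * m * K ^ 2) := by ring
end

section
/- For every integer s ≥ 2 and all reals d, ε, η ∈ (0,1) there exists m0 such that the following holds for every integer m ≥ m0, where α = exp(−ε^{−2s}). Let V_1, …, V_s be pairwise disjoint m-element sets and let P be an s-graph whose edges each contain exactly one vertex from each V_i, with e(P) ≥ d·m^s. Then there exist an integer m1 with α·η·m ≤ m1 ≤ η·m and sets U_i ⊆ V_i with |U_i| = m1 for every i ∈ {1, …, s}, such that for all X_1 ⊆ U_1, …, X_s ⊆ U_s with |X_i| ≥ ε·m1 for every i, the number of edges of P with one vertex in each X_i is at least (d − ε)·|X_1|·|X_2|·…·|X_s|. -/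
/-!
The proof is a density increment. If a box `U` of density `D ≥ d` fails to be lower regular, then a
subbox `X` whose sides have relative size at least `ε` has density below `d - ε`. Cutting each side
`U i` into `X i` and `U i \ X i` splits `U` into `2 ^ s` boxes; as `X` fills at least an `ε ^ s`
fraction of `U`, one of the other pieces has density above `D + ε ^ (s + 1)`.

To keep all sides equal, average over boxes of prescribed side length: first trim `X` to sides
`⌈ε * n⌉` without raising its density, then trim the dense piece to sides `⌊ε * (1 - ε) * n⌋`
without lowering it; both `⌈ε * n⌉` and `n - ⌈ε * n⌉` are large enough for this.

Densities are at most `1`, so a lower regular box appears after at most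
`K = ⌊(1 - d) / ε ^ (s + 1)⌋` increments. For `ε ≤ d` the total shrinking factor
`(ε * (1 - ε)) ^ K` exceeds `exp (-ε ^ (-2 * s))` strictly, and for large `m` this slack absorbs the
rounding losses. For `d ≤ ε` the lower bound on the density is not positive.
-/

section BoxDensity

open Finset
open scoped BigOperators

variable {ι : Type*} [Fintype ι] [DecidableEq ι] {V : ι → Type*}

/-- The edges inside the box `∏ i, X i` of the multipartite hypergraph encoded by the relation `R`
on tuples with one vertex in each part `V i`; the analogue of `Rel.interedges` for any number of
parts. -/
def boxEdges (R : (∀ i, V i) → Prop) [DecidablePred R] (X : ∀ i, Finset (V i)) :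
    Finset (∀ i, V i) :=
  {x ∈ Fintype.piFinset X | R x}

/-- The proportion of tuples in the box `∏ i, X i` that are edges of `R`; it is `0` on an empty
box. -/
noncomputable def boxDensity (R : (∀ i, V i) → Prop) [DecidablePred R]
    (X : ∀ i, Finset (V i)) : ℝ :=
  #(boxEdges R X) / ∏ i, (#(X i) : ℝ)

/-- One-sided regularity: every subbox whose sides have relative size at least `ε` has density at
least `c`. -/
def IsLowerRegular (R : (∀ i, V i) → Prop) [DecidablePred R] (c ε : ℝ)
    (U : ∀ i, Finset (V i)) : Prop :=
  ∀ X, (∀ i, X i ⊆ U i) → (∀ i, ε * #(U i) ≤ #(X i)) → c ≤ boxDensity R X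

section Basic

variable {R : (∀ i, V i) → Prop} [DecidablePred R] {X : ∀ i, Finset (V i)}

lemma mem_boxEdges {x : ∀ i, V i} : x ∈ boxEdges R X ↔ (∀ i, x i ∈ X i) ∧ R x := by
  simp [boxEdges]

variable (R X) in
lemma card_boxEdges_le : (#(boxEdges R X) : ℝ) ≤ ∏ i, (#(X i) : ℝ) := by
  rw [← Nat.cast_prod, ← Fintype.card_piFinset]
  exact_mod_cast card_filter_le _ _

lemma boxDensity_nonneg : 0 ≤ boxDensity R X := by
  unfold boxDensity
  positivity

lemma boxDensity_le_one : boxDensity R X ≤ 1 :=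
  div_le_one_of_le₀ (card_boxEdges_le R X) (by positivity)

lemma isLowerRegular_of_nonpos {c ε : ℝ} (hc : c ≤ 0) : IsLowerRegular R c ε X :=
  fun _ _ _ ↦ hc.trans boxDensity_nonneg

variable (R X) in
lemma boxDensity_mul_prod_card : boxDensity R X * ∏ i, (#(X i) : ℝ) = #(boxEdges R X) := by
  refine div_mul_cancel_of_imp fun hbox ↦ ?_
  exact le_antisymm (hbox ▸ card_boxEdges_le R X) (Nat.cast_nonneg _)

end Basic

section Averaging

lemma card_filter_mem_powersetCard_succ {α : Type*} [DecidableEq α] {X : Finset α} {a : α}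
    (ha : a ∈ X) (k : ℕ) : #{Y ∈ X.powersetCard (k + 1) | a ∈ Y} = (#X - 1).choose k := by
  rw [← card_erase_of_mem ha, ← card_powersetCard]
  refine card_nbij' (fun Y ↦ Y.erase a) (insert a) ?_ ?_ ?_ ?_
  · intro Y hY
    simp_all [erase_subset_erase]
  · intro Y hY
    simp only [mem_coe, mem_powersetCard, subset_erase] at hY
    simp [insert_subset_iff, ha, hY]
  · intro Y hY
    exact insert_erase (mem_filter.1 hY).2
  · intro Y hY
    exact erase_insert (subset_erase.1 (mem_powersetCard.1 hY).1).2

variable (R : (∀ i, V i) → Prop) [DecidablePred R] {X : ∀ i, Finset (V i)} {k : ℕ}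

lemma card_filter_forall_mem_powersetCard_succ [∀ i, DecidableEq (V i)] {x : ∀ i, V i}
    (hx : ∀ i, x i ∈ X i) (k : ℕ) :
    #{Y ∈ Fintype.piFinset fun i ↦ (X i).powersetCard (k + 1) | ∀ i, x i ∈ Y i} =
      ∏ i, (#(X i) - 1).choose k := by
  have boxes_through :
      {Y ∈ Fintype.piFinset fun i ↦ (X i).powersetCard (k + 1) | ∀ i, x i ∈ Y i} =
        Fintype.piFinset fun i ↦ {Y ∈ (X i).powersetCard (k + 1) | x i ∈ Y} := by
    ext Y
    simp only [mem_filter, Fintype.mem_piFinset, forall_and]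
  rw [boxes_through, Fintype.card_piFinset]
  exact prod_congr rfl fun i _ ↦ card_filter_mem_powersetCard_succ (hx i) k

lemma sum_card_boxEdges_powersetCard (X : ∀ i, Finset (V i)) (k : ℕ) :
    ∑ Y ∈ Fintype.piFinset fun i ↦ (X i).powersetCard (k + 1), #(boxEdges R Y) =
      #(boxEdges R X) * ∏ i, (#(X i) - 1).choose k := by
  classical
  have edges_subbox : ∀ Y ∈ Fintype.piFinset fun i ↦ (X i).powersetCard (k + 1),
      #(boxEdges R Y) = ∑ x ∈ boxEdges R X, if ∀ i, x i ∈ Y i then 1 else 0 := by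
    intro Y hY
    have hYX i : Y i ⊆ X i := (mem_powersetCard.1 (Fintype.mem_piFinset.1 hY i)).1
    rw [← card_filter]
    congr 1
    ext x
    simp only [mem_boxEdges, mem_filter]
    exact ⟨fun h ↦ ⟨⟨fun i ↦ hYX i (h.1 i), h.2⟩, h.1⟩, fun h ↦ ⟨h.2, h.1.2⟩⟩
  rw [sum_congr rfl edges_subbox, sum_comm, ← smul_eq_mul]
  refine sum_eq_card_nsmul fun x hx ↦ ?_
  rw [← card_filter, card_filter_forall_mem_powersetCard_succ (mem_boxEdges.1 hx).1]

lemma cast_choose_pred_div_succ {n : ℕ} (hn : 0 < n) (k : ℕ) :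
    ((n - 1).choose k : ℝ) / (k + 1 : ℕ) = n.choose (k + 1) / n := by
  obtain ⟨n, rfl⟩ := Nat.exists_eq_succ_of_ne_zero hn.ne'
  rw [div_eq_div_iff (by positivity) (by positivity), mul_comm]
  exact_mod_cast Nat.add_one_mul_choose_eq n k

lemma expect_boxDensity_powersetCard (hk : 0 < k) (hX : ∀ i, k ≤ #(X i)) :
    𝔼 Y ∈ Fintype.piFinset fun i ↦ (X i).powersetCard k, boxDensity R Y = boxDensity R X := by
  obtain ⟨k, rfl⟩ := Nat.exists_eq_succ_of_ne_zero hk.ne'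
  set boxes := Fintype.piFinset fun i ↦ (X i).powersetCard (k + 1)
  have card_boxes : (#boxes : ℝ) = ∏ i, ((#(X i)).choose (k + 1) : ℝ) := by
    simp [boxes, Fintype.card_piFinset]
  have boxes_pos : (0 : ℝ) < #boxes := by
    rw [card_boxes]
    exact prod_pos fun i _ ↦ by exact_mod_cast Nat.choose_pos (hX i)
  have density_of_mem : ∀ Y ∈ boxes,
      boxDensity R Y = #(boxEdges R Y) / ∏ _i : ι, ((k + 1 : ℕ) : ℝ) := by
    intro Y hY
    have hcard i : #(Y i) = k + 1 := (mem_powersetCard.1 (Fintype.mem_piFinset.1 hY i)).2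
    simp only [boxDensity, hcard]
  rw [expect_eq_sum_div_card, div_eq_iff boxes_pos.ne']
  calc ∑ Y ∈ boxes, boxDensity R Y
      = (#(boxEdges R X) * ∏ i, (#(X i) - 1).choose k : ℕ) / ∏ _i : ι, ((k + 1 : ℕ) : ℝ) := by
        rw [sum_congr rfl density_of_mem, ← sum_div, ← Nat.cast_sum,
          sum_card_boxEdges_powersetCard]
    _ = #(boxEdges R X) * ∏ i, ((#(X i) - 1).choose k : ℝ) / (k + 1 : ℕ) := by
        rw [Nat.cast_mul, Nat.cast_prod, mul_div_assoc, ← prod_div_distrib]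
    _ = #(boxEdges R X) * ∏ i, ((#(X i)).choose (k + 1) : ℝ) / #(X i) := by
        congr 1
        exact prod_congr rfl fun i _ ↦ cast_choose_pred_div_succ (k.succ_pos.trans_le (hX i)) k
    _ = boxDensity R X * #boxes := by
        rw [prod_div_distrib, card_boxes, boxDensity]
        ring

lemma exists_subbox_le_boxDensity (hk : 0 < k) (hX : ∀ i, k ≤ #(X i)) :
    ∃ Y, (∀ i, Y i ⊆ X i ∧ #(Y i) = k) ∧ boxDensity R X ≤ boxDensity R Y := by
  obtain ⟨Y, hY, hle⟩ := exists_le_of_le_expect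
    (Fintype.piFinset_nonempty.2 fun i ↦ powersetCard_nonempty.2 (hX i))
    (expect_boxDensity_powersetCard R hk hX).ge
  exact ⟨Y, fun i ↦ mem_powersetCard.1 (Fintype.mem_piFinset.1 hY i), hle⟩

lemma exists_subbox_boxDensity_le (hk : 0 < k) (hX : ∀ i, k ≤ #(X i)) :
    ∃ Y, (∀ i, Y i ⊆ X i ∧ #(Y i) = k) ∧ boxDensity R Y ≤ boxDensity R X := by
  obtain ⟨Y, hY, hle⟩ := exists_le_of_expect_le
    (Fintype.piFinset_nonempty.2 fun i ↦ powersetCard_nonempty.2 (hX i))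
    (expect_boxDensity_powersetCard R hk hX).le
  exact ⟨Y, fun i ↦ mem_powersetCard.1 (Fintype.mem_piFinset.1 hY i), hle⟩

end Averaging

section Increment

variable {R : (∀ i, V i) → Prop} [DecidablePred R] {c ε : ℝ} {U X : ∀ i, Finset (V i)}

lemma sum_card_boxEdges_piecewise_sdiff [∀ i, DecidableEq (V i)]
    (R : (∀ i, V i) → Prop) [DecidablePred R] (hXU : ∀ i, X i ⊆ U i) :
    ∑ S : Finset ι, #(boxEdges R (S.piecewise X (U \ X))) = #(boxEdges R U) := by
  rw [card_eq_sum_card_fiberwise (f := fun x ↦ ({i | x i ∈ X i} : Finset ι)) (t := univ)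
    fun _ _ ↦ mem_coe.2 (mem_univ _)]
  refine sum_congr rfl fun S _ ↦ ?_
  congr 1
  ext x
  have mem_side i : x i ∈ S.piecewise X (U \ X) i ↔ x i ∈ U i ∧ (x i ∈ X i ↔ i ∈ S) := by
    by_cases hi : i ∈ S
    · simpa [hi] using @hXU i (x i)
    · simp [hi]
  simp only [mem_boxEdges, mem_filter, mem_side, forall_and, Finset.ext_iff, mem_univ, true_and]
  tauto

lemma sum_prod_card_piecewise_sdiff [∀ i, DecidableEq (V i)] (hXU : ∀ i, X i ⊆ U i) :
    ∑ S : Finset ι, ∏ i, (#(S.piecewise X (U \ X) i) : ℝ) = ∏ i, (#(U i) : ℝ) := by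
  have := sum_card_boxEdges_piecewise_sdiff (fun _ ↦ True) hXU
  simp only [boxEdges, filter_true, Fintype.card_piFinset] at this
  exact_mod_cast this

lemma exists_boxDensity_piecewise_sdiff_gt [∀ i, DecidableEq (V i)] (hε : 0 < ε)
    (hXU : ∀ i, X i ⊆ U i) (hcard : ∀ i, ε * #(U i) ≤ #(X i))
    (hsparse : boxDensity R X + ε ≤ boxDensity R U) :
    ∃ S : Finset ι, boxDensity R U + ε ^ (Fintype.card ι + 1) <
      boxDensity R (S.piecewise X (U \ X)) := by
  set θ := ε ^ (Fintype.card ι + 1) with hθ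
  let vol (Y : ∀ i, Finset (V i)) : ℝ := ∏ i, (#(Y i) : ℝ)
  have vol_nonneg Y : 0 ≤ vol Y := prod_nonneg fun i _ ↦ Nat.cast_nonneg _
  have card_edges Y : (#(boxEdges R Y) : ℝ) = boxDensity R Y * vol Y :=
    (boxDensity_mul_prod_card R Y).symm
  have volU_pos : 0 < vol U := by
    refine (vol_nonneg U).lt_of_ne' fun hU ↦ ?_
    have : boxDensity R U = 0 := (congrArg (_ / ·) hU).trans (div_zero _)
    linarith [boxDensity_nonneg (R := R) (X := X)]
  have volX_ge : ε ^ Fintype.card ι * vol U ≤ vol X := by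
    rw [← card_univ, ← prod_const, ← prod_mul_distrib]
    exact prod_le_prod (fun i _ ↦ by positivity) fun i _ ↦ hcard i
  by_contra! hle
  let excess (S : Finset ι) : ℝ := (boxDensity R U + θ) * vol (S.piecewise X (U \ X)) -
    #(boxEdges R (S.piecewise X (U \ X)))
  have excess_nonneg S : 0 ≤ excess S := by
    rw [sub_nonneg, card_edges]
    exact mul_le_mul_of_nonneg_right (hle S) (vol_nonneg _)
  have sum_edges : ∑ S : Finset ι, (#(boxEdges R (S.piecewise X (U \ X))) : ℝ) =
      boxDensity R U * vol U := by
    rw [← card_edges, ← Nat.cast_sum, sum_card_boxEdges_piecewise_sdiff R hXU]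
  have sum_excess : ∑ S, excess S = θ * vol U := by
    rw [sum_sub_distrib, ← mul_sum, sum_prod_card_piecewise_sdiff hXU, sum_edges]
    ring
  have excess_univ : (ε + θ) * vol X ≤ excess univ := by
    simp only [excess, piecewise_univ, card_edges]
    nlinarith [vol_nonneg X]
  have excess_le : (ε + θ) * vol X ≤ θ * vol U :=
    sum_excess ▸ excess_univ.trans (single_le_sum (fun S _ ↦ excess_nonneg S) (mem_univ univ))
  have θ_volU_le : θ * vol U ≤ ε * vol X := by
    rw [hθ, pow_succ', mul_assoc]
    gcongr
  have θ_volX_pos : 0 < θ * vol X := mul_pos (by positivity)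
    (volX_ge.trans_lt' (mul_pos (by positivity) volU_pos))
  linarith

lemma floor_add_ceil_le (hε0 : 0 ≤ ε) (hε1 : ε ≤ 1) (n : ℕ) :
    ⌊ε * (1 - ε) * n⌋₊ + ⌈ε * n⌉₊ ≤ n := by
  have hfloor : (⌊ε * (1 - ε) * n⌋₊ : ℝ) ≤ (1 - ε) * n :=
    (Nat.floor_le (by bound)).trans (by gcongr; nlinarith)
  have hle : ⌊ε * (1 - ε) * n⌋₊ ≤ n := by
    exact_mod_cast hfloor.trans (mul_le_of_le_one_left n.cast_nonneg (by linarith))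
  have hceil : ⌈ε * n⌉₊ ≤ n - ⌊ε * (1 - ε) * n⌋₊ := by
    rw [Nat.ceil_le, Nat.cast_sub hle]
    linarith
  omega

lemma exists_boxDensity_increment_of_not_isLowerRegular (hε0 : 0 < ε) (hε1 : ε < 1) {n : ℕ}
    (hU : ∀ i, #(U i) = n) (hn : 1 ≤ ε * (1 - ε) * n) (hc : c + ε ≤ boxDensity R U)
    (hirr : ¬IsLowerRegular R c ε U) :
    ∃ W, (∀ i, W i ⊆ U i ∧ #(W i) = ⌊ε * (1 - ε) * n⌋₊) ∧
      boxDensity R U + ε ^ (Fintype.card ι + 1) ≤ boxDensity R W := by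
  classical
  obtain ⟨X, hXU, hXcard, hXc⟩ :
      ∃ X, (∀ i, X i ⊆ U i) ∧ (∀ i, ε * #(U i) ≤ #(X i)) ∧ boxDensity R X < c := by
    simpa [IsLowerRegular] using hirr
  have sizes := floor_add_ceil_le hε0.le hε1.le n
  have floor_le_ceil : ⌊ε * (1 - ε) * n⌋₊ ≤ ⌈ε * n⌉₊ :=
    (Nat.floor_mono (by gcongr; nlinarith)).trans (Nat.floor_le_ceil _)
  have floor_pos : 0 < ⌊ε * (1 - ε) * n⌋₊ := Nat.floor_pos.2 hn
  obtain ⟨Y, hY, hYX⟩ := exists_subbox_boxDensity_le R (floor_pos.trans_le floor_le_ceil)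
    fun i ↦ Nat.ceil_le.2 (hU i ▸ hXcard i)
  have hYU i : Y i ⊆ U i := (hY i).1.trans (hXU i)
  obtain ⟨S, hS⟩ := exists_boxDensity_piecewise_sdiff_gt hε0 hYU
    (fun i ↦ by rw [hU, (hY i).2]; exact Nat.le_ceil _) (by linarith)
  have piece_card i : ⌊ε * (1 - ε) * n⌋₊ ≤ #(S.piecewise Y (U \ Y) i) := by
    by_cases hi : i ∈ S
    · simpa [hi, hY] using floor_le_ceil
    · rw [piecewise_eq_of_notMem _ _ _ hi, Pi.sdiff_apply, card_sdiff_of_subset (hYU i), hU,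
        (hY i).2]
      omega
  obtain ⟨W, hW, hWS⟩ := exists_subbox_le_boxDensity R floor_pos piece_card
  refine ⟨W, fun i ↦ ⟨(hW i).1.trans ?_, (hW i).2⟩, hS.le.trans hWS⟩
  by_cases hi : i ∈ S
  · simpa [hi] using hYU i
  · simp [hi]

lemma exists_isLowerRegular_of_one_lt (hε0 : 0 < ε) (hε1 : ε < 1) {t n : ℕ}
    (hU : ∀ i, #(U i) = n) (hc : c + ε ≤ boxDensity R U)
    (ht : 1 < boxDensity R U + t * ε ^ (Fintype.card ι + 1))
    (hn : 2 ≤ (ε * (1 - ε)) ^ t * (n + 2)) :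
    ∃ j < t, ∃ n' ≤ n, (ε * (1 - ε)) ^ j * (n + 2) ≤ n' + 2 ∧
      ∃ W, (∀ i, W i ⊆ U i ∧ #(W i) = n') ∧ IsLowerRegular R c ε W := by
  set δ := ε * (1 - ε)
  have δ_pos : 0 < δ := mul_pos hε0 (sub_pos.2 hε1)
  have δ_le : δ ≤ 1 / 2 := by nlinarith [sq_nonneg (ε - 1 / 2)]
  induction t generalizing U n with
  | zero =>
    have : 1 < boxDensity R U := by simpa using ht
    exact absurd boxDensity_le_one this.not_ge
  | succ t ih =>
    by_cases hreg : IsLowerRegular R c ε U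
    · exact ⟨0, t.succ_pos, n, le_rfl, by simp, U, fun i ↦ ⟨subset_rfl, hU i⟩, hreg⟩
    have one_le : 1 ≤ δ * n := by
      have : δ ^ (t + 1) * (n + 2) ≤ δ * (n + 2) := by
        gcongr
        exact pow_le_of_le_one δ_pos.le (by linarith) t.succ_ne_zero
      linarith
    obtain ⟨W, hW, hdensity⟩ :=
      exists_boxDensity_increment_of_not_isLowerRegular hε0 hε1 hU one_le hc hreg
    have shrink_ge : δ * (n + 2) ≤ ⌊δ * n⌋₊ + 2 := by linarith [Nat.lt_floor_add_one (δ * n)]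
    have pow_succ_le k : δ ^ (k + 1) * (n + 2) ≤ δ ^ k * (⌊δ * n⌋₊ + 2) := by
      rw [pow_succ, mul_assoc]
      gcongr
    obtain ⟨j, hjt, n', hn', hn'_ge, W', hW', hreg'⟩ := ih (fun i ↦ (hW i).2)
      (hc.trans (by linarith [pow_pos hε0 (Fintype.card ι + 1)]))
      (ht.trans_le (by push_cast; linarith)) (hn.trans (pow_succ_le t))
    have floor_le : ⌊δ * n⌋₊ ≤ n :=
      Nat.floor_le_of_le (mul_le_of_le_one_left n.cast_nonneg (by linarith))
    exact ⟨j + 1, by omega, n', hn'.trans floor_le, (pow_succ_le j).trans hn'_ge, W',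
      fun i ↦ ⟨(hW' i).1.trans (hW i).1, (hW' i).2⟩, hreg'⟩

lemma floor_mul_le {η : ℝ} (hη : η ≤ 1) (m : ℕ) : ⌊η * m⌋₊ ≤ m :=
  Nat.floor_le_of_le (mul_le_of_le_one_left m.cast_nonneg hη)

lemma exists_isLowerRegular_of_le_boxDensity {d η : ℝ} (hε0 : 0 < ε) (hε1 : ε < 1)
    (hη0 : 0 < η) (hη1 : η ≤ 1) {t m : ℕ} (hU : ∀ i, #(U i) = m) (hd : d ≤ boxDensity R U)
    (ht : 1 < d + (t + 1) * ε ^ (Fintype.card ι + 1))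
    (hm : 2 ≤ (ε * (1 - ε)) ^ (t + 1) * (η * m)) :
    ∃ m₁ : ℕ, (ε * (1 - ε)) ^ t * (η * m) ≤ m₁ + 2 ∧ m₁ ≤ η * m ∧
      ∃ W, (∀ i, W i ⊆ U i ∧ #(W i) = m₁) ∧ IsLowerRegular R (d - ε) ε W := by
  set δ := ε * (1 - ε)
  have δ_pos : 0 < δ := mul_pos hε0 (sub_pos.2 hε1)
  have δ_le_one : δ ≤ 1 := by nlinarith
  have one_le : 1 ≤ η * m := by
    have := mul_le_of_le_one_left (by positivity : 0 ≤ η * m)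
      (pow_le_one₀ δ_pos.le δ_le_one : δ ^ (t + 1) ≤ 1)
    linarith
  have floor_ge : η * m ≤ ⌊η * m⌋₊ + 2 := by linarith [Nat.lt_floor_add_one (η * m)]
  obtain ⟨U₀, hU₀, hdensity⟩ := exists_subbox_le_boxDensity R (Nat.floor_pos.2 one_le)
    fun i ↦ (floor_mul_le hη1 m).trans (hU i).ge
  obtain ⟨j, hj, m₁, hm₁, hm₁_ge, W, hW, hreg⟩ :=
    exists_isLowerRegular_of_one_lt (c := d - ε) (t := t + 1) hε0 hε1 (fun i ↦ (hU₀ i).2)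
      (by linarith) (by push_cast; linarith) (hm.trans (by gcongr))
  refine ⟨m₁, le_trans ?_ hm₁_ge, ?_, W, fun i ↦ ⟨(hW i).1.trans (hU₀ i).1, (hW i).2⟩, hreg⟩
  · gcongr ?_ * ?_
    exact pow_le_pow_of_le_one δ_pos.le δ_le_one (Nat.le_of_lt_succ hj)
  · exact (Nat.cast_le.2 hm₁).trans (Nat.floor_le (by positivity))

end Increment

lemma exp_neg_rpow_lt_pow_floor {s : ℕ} (hs : 2 ≤ s) {d ε : ℝ} (hε0 : 0 < ε) (hε1 : ε < 1)
    (hεd : ε ≤ d) (hd1 : d ≤ 1) :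
    Real.exp (-(ε ^ (-(2 * (s : ℝ))))) < (ε * (1 - ε)) ^ ⌊(1 - d) / ε ^ (s + 1)⌋₊ := by
  have shrink_pos : 0 < ε * (1 - ε) := mul_pos hε0 (sub_pos.2 hε1)
  have neg_log_lt : -Real.log (ε * (1 - ε)) < (ε * (1 - ε))⁻¹ := by
    linarith [Real.one_sub_inv_le_log_of_pos shrink_pos]
  have neg_log_nonneg : 0 ≤ -Real.log (ε * (1 - ε)) :=
    neg_nonneg.2 (Real.log_nonpos shrink_pos.le (by nlinarith))
  have rpow_eq : ε ^ (-(2 * (s : ℝ))) = (ε ^ (2 * s))⁻¹ := by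
    rw [Real.rpow_neg hε0.le]
    exact_mod_cast congrArg _ (Real.rpow_natCast ε (2 * s))
  rw [← Real.exp_log (pow_pos shrink_pos _), Real.exp_lt_exp, Real.log_pow, rpow_eq, neg_lt,
    ← mul_neg]
  calc (⌊(1 - d) / ε ^ (s + 1)⌋₊ : ℝ) * -Real.log (ε * (1 - ε))
      ≤ (1 - ε) / ε ^ (s + 1) * -Real.log (ε * (1 - ε)) := by
        gcongr
        exact (Nat.floor_le (div_nonneg (sub_nonneg.2 hd1) (by positivity))).trans (by gcongr)
    _ < (1 - ε) / ε ^ (s + 1) * (ε * (1 - ε))⁻¹ := by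
        gcongr
    _ = (ε ^ (s + 2))⁻¹ := by
        have : 1 - ε ≠ 0 := (sub_pos.2 hε1).ne'
        field_simp
        ring
    _ ≤ (ε ^ (2 * s))⁻¹ := by
        gcongr ?_⁻¹
        exact pow_le_pow_of_le_one hε0.le hε1.le (by omega)

open Filter in
theorem eventually_exists_isLowerRegular (hι : 2 ≤ Fintype.card ι) {d ε η : ℝ} (hd1 : d ≤ 1)
    (hε0 : 0 < ε) (hε1 : ε < 1) (hη0 : 0 < η) (hη1 : η ≤ 1) :
    ∀ᶠ m : ℕ in atTop, ∀ (V : ι → Type*) (R : (∀ i, V i) → Prop) [DecidablePred R]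
      (A : ∀ i, Finset (V i)), (∀ i, #(A i) = m) → d ≤ boxDensity R A →
      ∃ m₁ : ℕ, Real.exp (-(ε ^ (-(2 * (Fintype.card ι : ℝ))))) * η * m ≤ m₁ ∧ m₁ ≤ η * m ∧
        ∃ U, (∀ i, U i ⊆ A i ∧ #(U i) = m₁) ∧ IsLowerRegular R (d - ε) ε U := by
  set α := Real.exp (-(ε ^ (-(2 * (Fintype.card ι : ℝ)))))
  have tendsto_ηm : Tendsto (fun m : ℕ ↦ η * m) atTop atTop :=
    tendsto_natCast_atTop_atTop.const_mul_atTop hη0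
  rcases le_or_gt d ε with hdε | hεd
  · have α_lt_one : α < 1 := Real.exp_lt_one_iff.2 (neg_neg_of_pos (Real.rpow_pos_of_pos hε0 _))
    filter_upwards [(tendsto_ηm.const_mul_atTop (sub_pos.2 α_lt_one)).eventually_ge_atTop 1]
      with m hm V R _ A hA _
    have floor_ge : α * η * m ≤ ⌊η * m⌋₊ := by linarith [Nat.lt_floor_add_one (η * m)]
    choose U hU using fun i ↦ exists_subset_card_eq ((floor_mul_le hη1 m).trans (hA i).ge)
    exact ⟨_, floor_ge, Nat.floor_le (by positivity), U, hU,
      isLowerRegular_of_nonpos (sub_nonpos.2 hdε)⟩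
  · set K := ⌊(1 - d) / ε ^ (Fintype.card ι + 1)⌋₊
    have α_lt : α < (ε * (1 - ε)) ^ K := exp_neg_rpow_lt_pow_floor hι hε0 hε1 hεd.le hd1
    have one_lt : 1 < d + (K + 1) * ε ^ (Fintype.card ι + 1) := by
      linarith [(div_lt_iff₀ (by positivity)).1
        (Nat.lt_floor_add_one ((1 - d) / ε ^ (Fintype.card ι + 1)))]
    have shrink_pos : 0 < (ε * (1 - ε)) ^ (K + 1) := pow_pos (mul_pos hε0 (sub_pos.2 hε1)) _
    filter_upwards [(tendsto_ηm.const_mul_atTop (sub_pos.2 α_lt)).eventually_ge_atTop 2,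
      (tendsto_ηm.const_mul_atTop shrink_pos).eventually_ge_atTop 2] with m hmα hm V R _ A hA hd
    obtain ⟨m₁, hm₁_ge, hm₁_le, hreg⟩ :=
      exists_isLowerRegular_of_le_boxDensity hε0 hε1 hη0 hη1 hA hd one_lt hm
    exact ⟨m₁, by linarith, hm₁_le, hreg⟩

section Hypergraph

variable {V : Type*} [DecidableEq V]

lemma card_boxEdges_image_mem {E : Finset (Finset V)} {X : ι → Finset V}
    (hX : Pairwise fun i j ↦ Disjoint (X i) (X j)) (hE : ∀ e ∈ E, #e = Fintype.card ι) :
    #(boxEdges (fun x : ι → V ↦ univ.image x ∈ E) X) =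
      #{e ∈ E | ∀ i, (e ∩ X i).Nonempty} := by
  have transversal_injective {x : ι → V} (hx : ∀ i, x i ∈ X i) : x.Injective := by
    intro i j hij
    by_contra hne
    exact disjoint_left.1 (hX hne) (hx i) (hij ▸ hx j)
  refine card_nbij (univ.image ·) ?_ ?_ ?_
  · intro x hx
    obtain ⟨hxX, hxE⟩ := mem_boxEdges.1 hx
    refine mem_filter.2 ⟨hxE, fun i ↦ ⟨x i, ?_⟩⟩
    simp [hxX i]
  · intro x hx y hy hxy
    have hxX := (mem_boxEdges.1 hx).1
    have hyX := (mem_boxEdges.1 hy).1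
    funext i
    have mem_image_y : x i ∈ univ.image y :=
      (congrArg (x i ∈ ·) hxy).mp (mem_image_of_mem x (mem_univ i))
    obtain ⟨j, -, hj⟩ := mem_image.1 mem_image_y
    obtain rfl : j = i := by
      by_contra hne
      exact disjoint_left.1 (hX hne) (hyX j) (hj ▸ hxX i)
    exact hj.symm
  · intro e he
    obtain ⟨heE, hne⟩ := mem_filter.1 he
    choose x hx using hne
    have hxX i : x i ∈ X i := (mem_inter.1 (hx i)).2
    have image_eq : univ.image x = e := by
      refine eq_of_subset_of_card_le (image_subset_iff.2 fun i _ ↦ (mem_inter.1 (hx i)).1) ?_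
      rw [hE e heE, card_image_of_injective _ (transversal_injective hxX), card_univ]
    exact ⟨x, mem_boxEdges.2 ⟨hxX, image_eq ▸ heE⟩, image_eq⟩

end Hypergraph

end BoxDensity

/-- For every `s ≥ 2` and `d, ε, η ∈ (0,1)` there is `m0` such that for every
`m ≥ m0` (with `α = exp(−ε^{−2s})`): if `V_1, …, V_s` are pairwise disjoint `m`-sets and `P`
is an `s`-partite `s`-graph on them with `e(P) ≥ d·m^s`, then there exist `m1` with
`α·η·m ≤ m1 ≤ η·m` and sets `U_i ⊆ V_i` with `|U_i| = m1` such that for all `X_i ⊆ U_i` with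
`|X_i| ≥ ε·m1`, the number of edges of `P` with one vertex in each `X_i` is at least
`(d − ε)·|X_1|·…·|X_s|`. -/
theorem stmt_18 (s : ℕ) (hs : 2 ≤ s) (d ε η : ℝ)
    (hd0 : 0 < d) (hd1 : d < 1) (hε0 : 0 < ε) (hε1 : ε < 1) (hη0 : 0 < η) (hη1 : η < 1) :
    ∃ m0 : ℕ, ∀ m : ℕ, m0 ≤ m →
    ∀ (V : Type) [DecidableEq V] (A : Fin s → Finset V),
      (∀ i j, i ≠ j → Disjoint (A i) (A j)) → (∀ i, (A i).card = m) →
    ∀ E : Finset (Finset V),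
      (∀ e ∈ E, e.card = s ∧ ∀ i, (e ∩ A i).card = 1) →
      d * (m : ℝ) ^ s ≤ (E.card : ℝ) →
    ∃ m1 : ℕ,
      Real.exp (-(ε ^ (-(2 * (s : ℝ))))) * η * m ≤ (m1 : ℝ) ∧ (m1 : ℝ) ≤ η * m ∧
      ∃ U : Fin s → Finset V, (∀ i, U i ⊆ A i ∧ (U i).card = m1) ∧
        ∀ X : Fin s → Finset V, (∀ i, X i ⊆ U i) → (∀ i, ε * m1 ≤ ((X i).card : ℝ)) →
          (d - ε) * ∏ i, ((X i).card : ℝ) ≤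
            ((E.filter (fun e => ∀ i, (e ∩ X i).Nonempty)).card : ℝ) := by
  have regular := eventually_exists_isLowerRegular (ι := Fin s) (by simpa using hs) hd1.le hε0 hε1
    hη0 hη1.le
  simp only [Fintype.card_fin] at regular
  obtain ⟨m0, hm0⟩ := Filter.eventually_atTop.1 (regular.and (Filter.eventually_gt_atTop 0))
  refine ⟨m0, fun m hm V _ A hdisj hA E hE hdE ↦ ?_⟩
  obtain ⟨regular, m_pos⟩ := hm0 m hm
  have card_edges (X : Fin s → Finset V) (hX : ∀ i, X i ⊆ A i) :
      (boxEdges (fun x : Fin s → V ↦ Finset.univ.image x ∈ E) X).card =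
        (E.filter fun e ↦ ∀ i, (e ∩ X i).Nonempty).card := by
    convert card_boxEdges_image_mem (fun i j hij ↦ (hdisj i j hij).mono (hX i) (hX j))
      fun e he ↦ by simpa using (hE e he).1
  have dense : d ≤ boxDensity (fun x : Fin s → V ↦ Finset.univ.image x ∈ E) A := by
    have meets_parts : ∀ e ∈ E, ∀ i, (e ∩ A i).Nonempty :=
      fun e he i ↦ Finset.card_pos.1 ((hE e he).2 i ▸ one_pos)
    rw [boxDensity, card_edges A fun i ↦ subset_rfl, Finset.filter_true_of_mem meets_parts]
    simpa [hA, le_div_iff₀ (by positivity : (0 : ℝ) < (m : ℝ) ^ s)] using hdE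
  obtain ⟨m1, hm1_ge, hm1_le, U, hU, hreg⟩ := regular (fun _ ↦ V) _ A hA dense
  refine ⟨m1, hm1_ge, hm1_le, U, hU, fun X hXU hXcard ↦ ?_⟩
  rw [← card_edges X fun i ↦ (hXU i).trans (hU i).1, ← boxDensity_mul_prod_card]
  gcongr
  exact hreg X hXU fun i ↦ by simpa [hU] using hXcard i
end

section
/- For every integer t ≥ 2 and every ε > 0 there exists s0 such that for every integer s ≥ s0 there exists n0 such that the following holds for every n ≥ n0. Let G be a simple graph on an n-element vertex set belonging to DegSeq_{t,ε}. Then for every 2t-element vertex set R, the number of s-element vertex sets S with R ⊆ S such that the induced subgraph G[S] belongs to DegSeq_{t,ε/2} (with s in place of n) is at least (1 − e^{−√s})·binom(n−2t, s−2t). -/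
/-!
Call a set `A ⊆ W` oversampled by `S ⊆ W` if `|S ∩ A| > (|A| / |W| + δ) |S|`. Intersections of a
random `m`-set with `A` have factorial moments at most those of a binomial variable, so Chernoff's
argument bounds the proportion of `S` oversampling a given `A` exponentially in `|S|`, even when `S`
is required to contain a few prescribed vertices.

Exclude the `S ⊇ R` which oversample the non-neighbourhood of one of their own vertices, or one of
the `s` sets `L i` of vertices whose degree in `G` is at most about `(c' + i / s) n`. A vertex of
degree at most `c' s + i` in a remaining `G[S]` then lies in `L i`. The hypothesis on `G` bounds
`|L i|` by about `(i / s) n`, with room to spare, so `S` contains fewer than `i` such vertices.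
-/

section

open Finset

section Sampling

theorem choose_le_div_pow_mul_choose {a n : ℕ} (h : a ≤ n) (j : ℕ) :
    (a.choose j : ℝ) ≤ ((a : ℝ) / n) ^ j * n.choose j := by
  induction j with
  | zero => simp
  | succ j ih =>
    have hstep : ((a - j : ℕ) : ℝ) ≤ a / n * (n - j : ℕ) := by
      rcases le_total a j with haj | hja
      · rw [Nat.sub_eq_zero_of_le haj, Nat.cast_zero]
        positivity
      rcases n.eq_zero_or_pos with rfl | hn
      · simp [Nat.le_zero.1 h]
      rw [Nat.cast_sub hja, Nat.cast_sub (hja.trans h), div_mul_eq_mul_div,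
        le_div_iff₀ (by exact_mod_cast hn)]
      have : (j : ℝ) * a ≤ j * n := by gcongr
      linarith
    refine le_of_mul_le_mul_right ?_ (by positivity : (0 : ℝ) < (j + 1 : ℕ))
    calc (a.choose (j + 1) : ℝ) * (j + 1 : ℕ)
        = a.choose j * (a - j : ℕ) := by exact_mod_cast a.choose_succ_right_eq j
      _ ≤ ((a : ℝ) / n) ^ j * n.choose j * (a / n * (n - j : ℕ)) := by gcongr
      _ = ((a : ℝ) / n) ^ (j + 1) * (n.choose j * (n - j : ℕ)) := by ring
      _ = ((a : ℝ) / n) ^ (j + 1) * (n.choose (j + 1) * (j + 1 : ℕ)) := by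
          congr 1
          exact_mod_cast (n.choose_succ_right_eq j).symm
      _ = _ := by ring

variable {α : Type*} [DecidableEq α] {A B R S W : Finset α} {m s : ℕ} {δ : ℝ}

/-- `S` oversamples `A` with respect to the ground set `W`: the proportion of `A` in `S` exceeds its
proportion in `W` by more than `δ`. -/
def Oversamples (W : Finset α) (δ : ℝ) (S A : Finset α) : Prop :=
  ((#A : ℝ) / #W + δ) * #S < #(S ∩ A)

noncomputable instance (W : Finset α) (δ : ℝ) (S A : Finset α) : Decidable (Oversamples W δ S A) :=
  Real.decidableLT _ _

theorem sum_powersetCard_choose_card_inter {j : ℕ} (hA : A ⊆ W) (hj : j ≤ m) :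
    ∑ T ∈ W.powersetCard m, (#(T ∩ A)).choose j = (#A).choose j * (#W - j).choose (m - j) := by
  have hcount (T : Finset α) :
      (#(T ∩ A)).choose j = #((A.powersetCard j).bipartiteAbove (fun T J ↦ J ⊆ T) T) := by
    rw [← card_powersetCard]
    congr 1
    ext J
    simp only [mem_powersetCard, subset_inter_iff, mem_bipartiteAbove]
    tauto
  simp_rw [hcount, sum_card_bipartiteAbove_eq_sum_card_bipartiteBelow, bipartiteBelow]
  rw [← card_powersetCard, ← smul_eq_mul]
  refine sum_const_nat fun J hJ ↦ ?_
  obtain ⟨hJA, rfl⟩ := mem_powersetCard.1 hJ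
  exact card_filter_powersetCard_subset J W m (hJA.trans hA) hj

theorem sum_powersetCard_one_add_pow_card_inter_le (hA : A ⊆ W) (m : ℕ) {x : ℝ} (hx : 0 ≤ x) :
    ∑ T ∈ W.powersetCard m, (1 + x) ^ #(T ∩ A)
      ≤ (#W).choose m * (1 + x * ((#A : ℝ) / #W)) ^ m := by
  have hexpand (T) (hT : T ∈ W.powersetCard m) :
      (1 + x) ^ #(T ∩ A) = ∑ j ∈ range (m + 1), x ^ j * ((#(T ∩ A)).choose j : ℝ) := by
    have hTA : #(T ∩ A) ≤ m := (card_le_card inter_subset_left).trans (mem_powersetCard.1 hT).2.le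
    rw [add_comm, add_pow]
    simp only [one_pow, mul_one]
    refine sum_subset (range_mono (by gcongr)) fun j _ hj ↦ ?_
    rw [Nat.choose_eq_zero_of_lt (by simpa using hj), Nat.cast_zero, mul_zero]
  rw [sum_congr rfl hexpand, sum_comm, add_comm 1, add_pow, mul_sum]
  refine sum_le_sum fun j hj ↦ ?_
  have hjm : j ≤ m := by simpa [Nat.lt_succ_iff] using hj
  rw [← mul_sum, ← Nat.cast_sum, sum_powersetCard_choose_card_inter hA hjm, Nat.cast_mul]
  have htrinomial : ((#W).choose j : ℝ) * (#W - j).choose (m - j) = (#W).choose m * m.choose j := by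
    exact_mod_cast (Nat.choose_mul hjm).symm
  calc x ^ j * ((#A).choose j * ((#W - j).choose (m - j) : ℝ))
      ≤ x ^ j * (((#A : ℝ) / #W) ^ j * (#W).choose j * (#W - j).choose (m - j)) := by
        gcongr
        exact choose_le_div_pow_mul_choose (card_le_card hA) j
    _ = x ^ j * ((#A : ℝ) / #W) ^ j * ((#W).choose j * (#W - j).choose (m - j)) := by ring
    _ = _ := by rw [htrinomial]; ring

theorem sum_powersetCard_exp_pow_card_inter_le (hA : A ⊆ W) (m : ℕ) {r : ℝ} (hr₀ : 0 ≤ r)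
    (hr₁ : r ≤ 1) :
    ∑ T ∈ W.powersetCard m, Real.exp r ^ #(T ∩ A)
      ≤ (#W).choose m * Real.exp (m * ((#A : ℝ) / #W * (r + r ^ 2))) := by
  have hexp : Real.exp r - 1 ≤ r + r ^ 2 := by
    have := Real.abs_exp_sub_one_sub_id_le (abs_le.2 ⟨by linarith, hr₁⟩)
    linarith [le_of_abs_le this]
  have hexp₀ : 0 ≤ Real.exp r - 1 := sub_nonneg.2 (Real.one_le_exp hr₀)
  have hmgf := sum_powersetCard_one_add_pow_card_inter_le hA m hexp₀
  rw [add_sub_cancel] at hmgf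
  refine hmgf.trans ?_
  rw [Real.exp_nat_mul]
  gcongr
  calc 1 + (Real.exp r - 1) * ((#A : ℝ) / #W) ≤ 1 + (r + r ^ 2) * ((#A : ℝ) / #W) := by gcongr
    _ = (#A : ℝ) / #W * (r + r ^ 2) + 1 := by ring
    _ ≤ _ := Real.add_one_le_exp _

theorem card_powersetCard_filter_oversamples_le (hA : A ⊆ W) (m : ℕ) (hδ₀ : 0 ≤ δ)
    (hδ₂ : δ ≤ 2) :
    (#{T ∈ W.powersetCard m | Oversamples W δ T A} : ℝ)
      ≤ Real.exp (-(δ ^ 2 / 4 * m)) * (#W).choose m := by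
  set p : ℝ := #A / #W
  have hp₁ : p ≤ 1 := div_le_one_of_le₀ (by exact_mod_cast card_le_card hA) (by positivity)
  -- Chernoff's argument at the parameter `r`, which minimises `r ^ 2 - r * δ`.
  set r : ℝ := δ / 2 with hr
  have hmarkov : (#{T ∈ W.powersetCard m | Oversamples W δ T A} : ℝ)
      * Real.exp (r * ((p + δ) * m)) ≤ ∑ T ∈ W.powersetCard m, Real.exp r ^ #(T ∩ A) := by
    rw [← nsmul_eq_mul]
    refine (card_nsmul_le_sum _ (fun T ↦ Real.exp r ^ #(T ∩ A)) _ fun T hT ↦ ?_).trans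
      (sum_le_sum_of_subset_of_nonneg (filter_subset _ _) fun _ _ _ ↦ by positivity)
    rw [← Real.exp_nat_mul, mul_comm _ r]
    obtain ⟨hT, hover⟩ := mem_filter.1 hT
    gcongr
    simpa only [(mem_powersetCard.1 hT).2] using hover.le
  calc (#{T ∈ W.powersetCard m | Oversamples W δ T A} : ℝ)
      ≤ (#W).choose m * Real.exp (m * (p * (r + r ^ 2))) / Real.exp (r * ((p + δ) * m)) :=
        (le_div_iff₀ (Real.exp_pos _)).2 (hmarkov.trans
          (sum_powersetCard_exp_pow_card_inter_le hA m (by linarith) (by linarith)))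
    _ = Real.exp (m * (p * r ^ 2 - r * δ)) * (#W).choose m := by
        rw [mul_div_assoc, ← Real.exp_sub, mul_comm]
        ring_nf
    _ ≤ Real.exp (-(δ ^ 2 / 4 * m)) * (#W).choose m := by
        have : p * r ^ 2 ≤ 1 * r ^ 2 := by gcongr
        have : p * r ^ 2 - r * δ ≤ -(δ ^ 2 / 4) := by rw [hr] at this ⊢; linarith
        gcongr
        calc (m : ℝ) * (p * r ^ 2 - r * δ) ≤ m * -(δ ^ 2 / 4) := by gcongr
          _ = _ := by ring

/-- The `s`-element subsets of `W` that contain `B`: the sample space of the union bounds. -/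
def extensions (W B : Finset α) (s : ℕ) : Finset (Finset α) :=
  {S ∈ W.powersetCard s | B ⊆ S}

/-- The `s`-element sets `B ⊆ S ⊆ W` that oversample `A`: the exceptional event attached to `A`. -/
noncomputable def oversampling (W B A : Finset α) (s : ℕ) (δ : ℝ) : Finset (Finset α) :=
  {S ∈ extensions W B s | Oversamples W δ S A}

theorem mem_extensions : S ∈ extensions W B s ↔ (S ⊆ W ∧ #S = s) ∧ B ⊆ S := by
  rw [extensions, mem_filter, mem_powersetCard]

theorem sum_card_extensions_insert (W R : Finset α) (s : ℕ) :
    ∑ v ∈ W, #(extensions W (insert v R) s) = #(extensions W R s) * s := by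
  have habove (v : α) :
      extensions W (insert v R) s = (extensions W R s).bipartiteAbove (· ∈ ·) v := by
    ext S
    simp only [mem_extensions, mem_bipartiteAbove, insert_subset_iff]
    tauto
  simp_rw [habove, sum_card_bipartiteAbove_eq_sum_card_bipartiteBelow, bipartiteBelow]
  refine sum_const_nat fun S hS ↦ ?_
  rw [filter_mem_eq_inter, inter_eq_right.2 (mem_extensions.1 hS).1.1, (mem_extensions.1 hS).1.2]

theorem card_sdiff_div_card_sdiff_le (hA : A ⊆ W) (hB : B ⊆ W) :
    (#(A \ B) : ℝ) / #(W \ B) ≤ (#A + #B) / #W := by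
  have hW : (#W : ℝ) = #(W \ B) + #B := by exact_mod_cast (card_sdiff_add_card_eq_card hB).symm
  have hle : (#(A \ B) : ℝ) ≤ #(W \ B) := by
    exact_mod_cast card_le_card (sdiff_subset_sdiff hA le_rfl)
  have hle' : (#(A \ B) : ℝ) ≤ #A := by exact_mod_cast card_le_card sdiff_subset
  rcases (Nat.cast_nonneg (α := ℝ) #(W \ B)).eq_or_lt with h0 | hpos
  · rw [← h0, div_zero]
    positivity
  rw [hW, div_le_div_iff₀ hpos (by positivity)]
  nlinarith [mul_le_mul_of_nonneg_right hle (Nat.cast_nonneg (α := ℝ) #B)]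

theorem Oversamples.sdiff (hS : Oversamples W δ S A) (hA : A ⊆ W) (hSW : S ⊆ W) (hBS : B ⊆ S)
    (hδ : 0 ≤ δ) (hBδ : 4 * (#B : ℝ) ≤ δ * #S) :
    Oversamples (W \ B) (δ / 2) (S \ B) (A \ B) := by
  have hinter : (#(S ∩ A) : ℝ) ≤ #((S \ B) ∩ (A \ B)) + #B := by
    have hsub : S ∩ A ⊆ ((S \ B) ∩ (A \ B)) ∪ B := by grind
    exact_mod_cast (card_le_card hsub).trans (card_union_le _ _)
  have hB : (#B : ℝ) / #W * #S ≤ #B := by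
    rw [div_mul_eq_mul_div]
    refine div_le_of_le_mul₀ (by positivity) (by positivity) ?_
    gcongr
  have hratio := card_sdiff_div_card_sdiff_le hA (hBS.trans hSW)
  calc ((#(A \ B) : ℝ) / #(W \ B) + δ / 2) * #(S \ B)
      ≤ ((#A + #B : ℝ) / #W + δ / 2) * #S := by
        gcongr
        exact sdiff_subset
    _ = ((#A : ℝ) / #W + δ) * #S + (#B : ℝ) / #W * #S - δ / 2 * #S := by ring
    _ < _ := by linarith [show ((#A : ℝ) / #W + δ) * #S < #(S ∩ A) from hS]

theorem card_oversampling_le (hA : A ⊆ W) (hB : B ⊆ W) (hδ₀ : 0 ≤ δ) (hδ₁ : δ ≤ 1)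
    (hBs : 4 * (#B : ℝ) ≤ δ * s) :
    (#(oversampling W B A s δ) : ℝ) ≤ Real.exp (-(δ ^ 2 / 32 * s)) * #(extensions W B s) := by
  have hδs : δ * s ≤ 1 * s := by gcongr
  have hBs' : #B ≤ s := by exact_mod_cast (by linarith : (#B : ℝ) ≤ s)
  set m := s - #B with hm
  have hinj : #(oversampling W B A s δ)
      ≤ #{T ∈ (W \ B).powersetCard m | Oversamples (W \ B) (δ / 2) T (A \ B)} := by
    refine card_le_card_of_injOn (· \ B) (fun S hS ↦ ?_) fun S hS S' hS' h ↦ ?_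
    · obtain ⟨hS, hover⟩ := mem_filter.1 hS
      obtain ⟨⟨hSW, rfl⟩, hBS⟩ := mem_extensions.1 hS
      exact mem_coe.2 (mem_filter.2
        ⟨mem_powersetCard.2 ⟨sdiff_subset_sdiff hSW le_rfl, card_sdiff_of_subset hBS⟩,
          hover.sdiff hA hSW hBS hδ₀ hBs⟩)
    · rw [← sdiff_union_of_subset (mem_extensions.1 (mem_filter.1 hS).1).2,
        ← sdiff_union_of_subset (mem_extensions.1 (mem_filter.1 hS').1).2]
      exact congrArg (· ∪ B) h
  have htail := card_powersetCard_filter_oversamples_le (sdiff_subset_sdiff hA (le_refl B)) m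
    (δ := δ / 2) (by linarith) (by linarith)
  have hcard : #(extensions W B s) = (#(W \ B)).choose m := by
    rw [extensions, card_filter_powersetCard_subset B W s hB hBs', card_sdiff_of_subset hB]
  have hrate : δ ^ 2 / 32 * s ≤ (δ / 2) ^ 2 / 4 * m := by
    have : (m : ℝ) = s - #B := by rw [hm, Nat.cast_sub hBs']
    nlinarith [sq_nonneg δ]
  rw [hcard]
  refine (Nat.cast_le.2 hinj).trans (htail.trans ?_)
  gcongr

theorem card_biUnion_oversampling_le {ι : Type*} {L : ι → Finset α} (I : Finset ι)
    (hL : ∀ i ∈ I, L i ⊆ W) (hR : R ⊆ W) (hδ₀ : 0 ≤ δ) (hδ₁ : δ ≤ 1)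
    (hRs : 4 * (#R : ℝ) ≤ δ * s) :
    (#(I.biUnion fun i ↦ oversampling W R (L i) s δ) : ℝ)
      ≤ #I * Real.exp (-(δ ^ 2 / 32 * s)) * #(extensions W R s) := by
  calc (#(I.biUnion fun i ↦ oversampling W R (L i) s δ) : ℝ)
      ≤ ∑ i ∈ I, (#(oversampling W R (L i) s δ) : ℝ) := by exact_mod_cast card_biUnion_le
    _ ≤ ∑ _i ∈ I, Real.exp (-(δ ^ 2 / 32 * s)) * #(extensions W R s) :=
        sum_le_sum fun _ hi ↦ card_oversampling_le (hL _ hi) hR hδ₀ hδ₁ hRs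
    _ = _ := by rw [sum_const, nsmul_eq_mul, mul_assoc]

theorem card_biUnion_oversampling_insert_le {A : α → Finset α} (hA : ∀ v ∈ W, A v ⊆ W)
    (hR : R ⊆ W) (hδ₀ : 0 ≤ δ) (hδ₁ : δ ≤ 1)
    (hRs : 4 * ((#R : ℝ) + 1) ≤ δ * s) :
    (#(W.biUnion fun v ↦ oversampling W (insert v R) (A v) s δ) : ℝ)
      ≤ s * Real.exp (-(δ ^ 2 / 32 * s)) * #(extensions W R s) := by
  have hinsert (v : α) : 4 * (#(insert v R) : ℝ) ≤ δ * s := by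
    have : (#(insert v R) : ℝ) ≤ #R + 1 := by exact_mod_cast card_insert_le v R
    linarith
  calc (#(W.biUnion fun v ↦ oversampling W (insert v R) (A v) s δ) : ℝ)
      ≤ ∑ v ∈ W, (#(oversampling W (insert v R) (A v) s δ) : ℝ) := by
        exact_mod_cast card_biUnion_le
    _ ≤ ∑ v ∈ W, Real.exp (-(δ ^ 2 / 32 * s)) * #(extensions W (insert v R) s) :=
        sum_le_sum fun v hv ↦ card_oversampling_le (hA v hv) (insert_subset hv hR) hδ₀ hδ₁
          (hinsert v)
    _ = Real.exp (-(δ ^ 2 / 32 * s)) * ((#(extensions W R s) * s : ℕ) : ℝ) := by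
        rw [← mul_sum, ← Nat.cast_sum, sum_card_extensions_insert]
    _ = _ := by push_cast; ring

end Sampling

section DegreeSequence

variable {V : Type*} (G : SimpleGraph V) [DecidableRel G.Adj]

/-- The vertices of `G[S]` of degree at most `x`. The induced subgraph is represented by its vertex
set, so that `G` itself is the case `S = univ`. -/
noncomputable def lowDegreeOn (S : Finset V) (x : ℝ) : Finset V :=
  {v ∈ S | (#{u ∈ S | G.Adj v u} : ℝ) ≤ x}

/-- The degree sequence `d₁ ≤ d₂ ≤ ⋯` of `G[S]` satisfies `d i > c |S| + i` for `1 ≤ i ≤ τ |S|`,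
expressed by counting vertices of low degree. The class `DegSeq_{t,ε}` is the case
`c = (t - 2) / t + ε`, `τ = 1 / t`. -/
def DegSeqOn (c τ : ℝ) (S : Finset V) : Prop :=
  ∀ i : ℕ, 1 ≤ i → i ≤ τ * #S → #(lowDegreeOn G S (c * #S + i)) < i

variable {G} {S : Finset V} {c c' τ δ x y : ℝ}

theorem lowDegreeOn_subset : lowDegreeOn G S x ⊆ S := filter_subset _ _

theorem lowDegreeOn_mono (hxy : x ≤ y) : lowDegreeOn G S x ⊆ lowDegreeOn G S y :=
  monotone_filter_right _ fun _ _ h ↦ h.trans hxy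

theorem DegSeqOn.card_lowDegreeOn_lt (hS : DegSeqOn G c τ S) (h1 : 1 ≤ τ * #S)
    (hx : x + 1 ≤ τ * #S) (hne : (lowDegreeOn G S (c * #S + x)).Nonempty) :
    #(lowDegreeOn G S (c * #S + x)) < x := by
  have hj : ((max 1 ⌈x⌉₊ : ℕ) : ℝ) ≤ τ * #S := by
    rcases le_total x 0 with hx0 | hx0
    · simpa [Nat.ceil_eq_zero.2 hx0] using h1
    · rw [Nat.cast_max, Nat.cast_one]
      exact max_le h1 ((Nat.ceil_lt_add_one hx0).le.trans hx)
  have hsub : lowDegreeOn G S (c * #S + x) ⊆ lowDegreeOn G S (c * #S + (max 1 ⌈x⌉₊ : ℕ)) :=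
    lowDegreeOn_mono <| by
      gcongr
      exact (Nat.le_ceil x).trans (by exact_mod_cast le_max_right _ _)
  have hlt := (card_le_card hsub).trans_lt (hS _ (le_max_left _ _) hj)
  exact Nat.lt_ceil.1 ((lt_max_iff.1 hlt).resolve_left (by have := hne.card_pos; omega))

theorem DegSeqOn.card_lowDegreeOn_lt_sub_mul (hS : DegSeqOn G c τ S) (hc : c' + 3 * δ ≤ c)
    (hδS : 1 ≤ δ * #S) (hyτ : y ≤ τ) (hy : 1 ≤ y * #S)
    (hne : (lowDegreeOn G S ((c' + y + δ) * #S)).Nonempty) :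
    #(lowDegreeOn G S ((c' + y + δ) * #S)) < (y - 2 * δ) * #S := by
  have hyτS : y * #S ≤ τ * #S := by gcongr
  have hcS : (c' + 3 * δ) * #S ≤ c * #S := by gcongr
  have hsub : lowDegreeOn G S ((c' + y + δ) * #S) ⊆ lowDegreeOn G S (c * #S + (y - 2 * δ) * #S) :=
    lowDegreeOn_mono (by linarith)
  exact (Nat.cast_le.2 (card_le_card hsub)).trans_lt
    (hS.card_lowDegreeOn_lt (hy.trans hyτS) (by linarith) (hne.mono hsub))

variable [Fintype V] [DecidableEq V]

theorem lowDegreeOn_subset_lowDegreeOn_univ (hS : S.Nonempty)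
    (hdeg : ∀ v ∈ S, ¬Oversamples univ δ S (G.neighborFinset v)ᶜ) :
    lowDegreeOn G S (y * #S) ⊆ lowDegreeOn G univ ((y + δ) * Fintype.card V) := by
  intro v hv
  obtain ⟨hvS, hvy⟩ := mem_filter.1 hv
  have hs : (0 : ℝ) < #S := by exact_mod_cast hS.card_pos
  have hn : (0 : ℝ) < Fintype.card V := by exact_mod_cast Fintype.card_pos_iff.2 ⟨v⟩
  have hcompl : (#(G.neighborFinset v)ᶜ : ℝ) = Fintype.card V - #{u | G.Adj v u} := by
    rw [card_compl, G.neighborFinset_eq_filter, Nat.cast_sub (card_le_univ _)]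
  have hcomplS : (#(S ∩ (G.neighborFinset v)ᶜ) : ℝ) = #S - #{u ∈ S | G.Adj v u} := by
    have hfilter : S ∩ (G.neighborFinset v)ᶜ = {u ∈ S | ¬G.Adj v u} := by
      ext u
      simp
    rw [hfilter, eq_sub_iff_add_eq']
    exact_mod_cast card_filter_add_card_filter_not (s := S) (G.Adj v)
  refine mem_filter.2 ⟨mem_univ v, ?_⟩
  have hratio : (#{u | G.Adj v u} : ℝ) / Fintype.card V ≤ y + δ := by
    have := not_lt.1 (hdeg v hvS)
    rw [card_univ, hcompl, hcomplS, sub_div, div_self hn.ne'] at this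
    refine le_of_mul_le_mul_right ?_ hs
    linarith
  exact (div_le_iff₀ hn).1 hratio

theorem DegSeqOn.of_not_oversamples (hG : DegSeqOn G c τ univ) (hδ : 0 < δ) (hc : c' + 3 * δ ≤ c)
    (hS : S.Nonempty) (hn : 1 ≤ δ * Fintype.card V)
    (hdeg : ∀ v ∈ S, ¬Oversamples univ δ S (G.neighborFinset v)ᶜ)
    (hlow : ∀ i ∈ Icc 1 #S, ¬Oversamples univ δ S
      (lowDegreeOn G univ ((c' + i / #S + δ) * Fintype.card V))) :
    DegSeqOn G c' τ S := by
  intro i hi hiτ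
  rcases lt_or_ge #S i with hSi | hiS
  · exact (card_le_card lowDegreeOn_subset).trans_lt hSi
  set L := lowDegreeOn G univ ((c' + i / #S + δ) * Fintype.card V) with hL
  have hs : (0 : ℝ) < #S := by exact_mod_cast hS.card_pos
  have hsn : (#S : ℝ) ≤ Fintype.card V := by exact_mod_cast card_le_univ S
  have hn₀ : (0 : ℝ) < Fintype.card V := hs.trans_le hsn
  have hsub : lowDegreeOn G S (c' * #S + i) ⊆ S ∩ L := by
    rw [show c' * #S + i = (c' + i / #S) * #S by field_simp]
    exact subset_inter lowDegreeOn_subset (lowDegreeOn_subset_lowDegreeOn_univ hS hdeg)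
  rcases L.eq_empty_or_nonempty with hL₀ | hLne
  · rw [hL₀, inter_empty, subset_empty] at hsub
    rw [hsub]
    exact hi
  have hi' : (1 : ℝ) ≤ i := by exact_mod_cast hi
  have hLcard : (#L : ℝ) < (i / #S - 2 * δ) * Fintype.card V := by
    rw [← card_univ] at hn hL ⊢
    rw [hL] at hLne ⊢
    refine hG.card_lowDegreeOn_lt_sub_mul hc hn ((div_le_iff₀ hs).2 hiτ) ?_ hLne
    calc (1 : ℝ) ≤ i / #S * #S := by rwa [div_mul_cancel₀ _ hs.ne']
      _ ≤ i / #S * #(univ : Finset V) := by gcongr; exact subset_univ S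
  have : (#(S ∩ L) : ℝ) < i := by
    calc (#(S ∩ L) : ℝ) ≤ ((#L : ℝ) / Fintype.card V + δ) * #S :=
          not_lt.1 (hlow i (mem_Icc.2 ⟨hi, hiS⟩))
      _ ≤ (i / #S - 2 * δ + δ) * #S := by
        gcongr
        exact ((div_lt_iff₀ hn₀).2 hLcard).le
      _ = i - δ * #S := by field_simp; ring
      _ < i := sub_lt_self _ (by positivity)
  exact (card_le_card hsub).trans_lt (by exact_mod_cast this)

end DegreeSequence

theorem two_mul_mul_exp_neg_le {κ s : ℝ} (hκ : 0 < κ) (hs : 0 ≤ s) (hκs : 3 / κ ≤ √s) :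
    2 * s * Real.exp (-(κ * s)) ≤ Real.exp (-√s) := by
  have hsq : √s * √s = s := Real.mul_self_sqrt hs
  have hκs' : 3 ≤ κ * √s := by rwa [div_le_iff₀' hκ] at hκs
  calc 2 * s * Real.exp (-(κ * s)) ≤ Real.exp (2 * √s) * Real.exp (-(κ * s)) := by
        gcongr
        have := Real.quadratic_le_exp_of_nonneg (by positivity : 0 ≤ 2 * √s)
        nlinarith [Real.sqrt_nonneg s]
    _ = Real.exp (2 * √s - κ * s) := by rw [← Real.exp_add, sub_eq_add_neg]
    _ ≤ Real.exp (-√s) := by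
        gcongr
        have : 3 * √s ≤ κ * s := by
          calc 3 * √s ≤ κ * √s * √s := by gcongr
            _ = κ * s := by rw [mul_assoc, hsq]
        linarith

section Counting

variable {V : Type*} [Fintype V] [DecidableEq V] {G : SimpleGraph V} [DecidableRel G.Adj]
  {c c' τ δ : ℝ} {s : ℕ} {R S : Finset V}

theorem exists_mem_oversampling_of_not_degSeqOn (hG : DegSeqOn G c τ univ) (hc : c' + 3 * δ ≤ c)
    (hδ : 0 < δ) (hs : 0 < s) (hn : 1 ≤ δ * Fintype.card V) (hS : S ∈ extensions univ R s)
    (hS' : ¬DegSeqOn G c' τ S) :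
    (∃ v, S ∈ oversampling univ (insert v R) (G.neighborFinset v)ᶜ s δ) ∨
      ∃ i ∈ Icc 1 s, S ∈ oversampling univ R
        (lowDegreeOn G univ ((c' + i / s + δ) * Fintype.card V)) s δ := by
  by_contra! h
  obtain ⟨⟨-, rfl⟩, hRS⟩ := mem_extensions.1 hS
  refine hS' (hG.of_not_oversamples hδ hc (card_pos.1 hs) hn
    (fun v hv hover ↦ h.1 v (mem_filter.2 ⟨?_, hover⟩))
    (fun i hi hover ↦ h.2 i hi (mem_filter.2 ⟨hS, hover⟩)))
  exact mem_extensions.2 ⟨⟨subset_univ S, rfl⟩, insert_subset hv hRS⟩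

theorem one_sub_mul_card_extensions_le_ncard_degSeqOn (hG : DegSeqOn G c τ univ)
    (hc : c' + 3 * δ ≤ c) (hδ₀ : 0 < δ) (hδ₁ : δ ≤ 1) (hsn : s ≤ Fintype.card V)
    (hR : 4 * ((#R : ℝ) + 1) ≤ δ * s) :
    (1 - 2 * s * Real.exp (-(δ ^ 2 / 32 * s))) * #(extensions univ R s)
      ≤ {S : Finset V | #S = s ∧ R ⊆ S ∧ DegSeqOn G c' τ S}.ncard := by
  classical
  have hδs : 4 ≤ δ * s := by linarith [Nat.cast_nonneg (α := ℝ) #R]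
  have hs : 0 < s := Nat.pos_of_ne_zero (by rintro rfl; norm_num at hδs)
  have hδn : 1 ≤ δ * Fintype.card V := by
    have : δ * s ≤ δ * Fintype.card V := by gcongr
    linarith
  set L : ℕ → Finset V := fun i ↦ lowDegreeOn G univ ((c' + i / s + δ) * Fintype.card V)
  set badVertex := univ.biUnion fun v ↦
    oversampling univ (insert v R) (G.neighborFinset v)ᶜ s δ with hbadVertex
  set badLevel := (Icc 1 s).biUnion fun i ↦ oversampling univ R (L i) s δ with hbadLevel
  set good : Finset (Finset V) := {S | #S = s ∧ R ⊆ S ∧ DegSeqOn G c' τ S}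
  have hcover : extensions univ R s ⊆ good ∪ (badVertex ∪ badLevel) := by
    intro S hS
    by_cases hS' : DegSeqOn G c' τ S
    · obtain ⟨⟨-, hSs⟩, hRS⟩ := mem_extensions.1 hS
      exact mem_union_left _ (mem_filter.2 ⟨mem_univ S, hSs, hRS, hS'⟩)
    · rw [mem_union, mem_union, hbadVertex, hbadLevel, mem_biUnion, mem_biUnion]
      simpa only [mem_univ, true_and] using
        Or.inr (exists_mem_oversampling_of_not_degSeqOn hG hc hδ₀ hs hδn hS hS')
  have hcard : (#(extensions univ R s) : ℝ) ≤ #good + (#badVertex + #badLevel) := by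
    exact_mod_cast (card_le_card hcover).trans
      ((card_union_le _ _).trans (Nat.add_le_add_left (card_union_le _ _) _))
  have hvertex := card_biUnion_oversampling_insert_le (A := fun v ↦ (G.neighborFinset v)ᶜ)
    (fun _ _ ↦ subset_univ _) (subset_univ R) hδ₀.le hδ₁ hR
  have hlevel := card_biUnion_oversampling_le (L := L) (Icc 1 s) (fun _ _ ↦ subset_univ _)
    (subset_univ R) hδ₀.le hδ₁ (by linarith : 4 * (#R : ℝ) ≤ δ * s)
  rw [Nat.card_Icc, Nat.add_sub_cancel] at hlevel
  rw [← coe_filter_univ, Set.ncard_coe_finset]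
  linarith

end Counting

theorem stmt_19_general {c c' : ℝ} (hc : c' < c) (τ : ℝ) (r : ℕ) :
    ∃ s0 : ℕ, ∀ s ≥ s0, ∀ (V : Type*) [Fintype V] [DecidableEq V], s ≤ Fintype.card V →
      ∀ (G : SimpleGraph V) [DecidableRel G.Adj], DegSeqOn G c τ univ →
      ∀ R : Finset V, #R ≤ r →
        (1 - Real.exp (-√s)) * (Fintype.card V - #R).choose (s - #R)
          ≤ {S : Finset V | #S = s ∧ R ⊆ S ∧ DegSeqOn G c' τ S}.ncard := by
  set δ : ℝ := min ((c - c') / 3) 1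
  have hδ₀ : 0 < δ := lt_min (by linarith) one_pos
  have hδ₁ : δ ≤ 1 := min_le_right _ _
  have hcδ : c' + 3 * δ ≤ c := by linarith [min_le_left ((c - c') / 3) 1]
  set κ : ℝ := δ ^ 2 / 32
  refine ⟨max ⌈4 * ((r : ℝ) + 1) / δ⌉₊ ⌈(3 / κ) ^ 2⌉₊, fun s hs V _ _ hsV G _ hG R hR ↦ ?_⟩
  have hrs : 4 * ((r : ℝ) + 1) ≤ δ * s :=
    (div_le_iff₀' hδ₀).1 (Nat.ceil_le.1 ((le_max_left _ _).trans hs))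
  have hκs : 3 / κ ≤ √s := Real.le_sqrt_of_sq_le (Nat.ceil_le.1 ((le_max_right _ _).trans hs))
  have hRr : (#R : ℝ) ≤ r := by exact_mod_cast hR
  have hRs : #R ≤ s := by
    have : δ * s ≤ 1 * s := by gcongr
    exact_mod_cast (by linarith : (#R : ℝ) ≤ s)
  have hcount : #(extensions univ R s) = (Fintype.card V - #R).choose (s - #R) :=
    card_filter_powersetCard_subset R univ s (subset_univ R) hRs
  rw [← hcount]
  refine le_trans ?_
    (one_sub_mul_card_extensions_le_ncard_degSeqOn hG hcδ hδ₀ hδ₁ hsV (by linarith))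
  gcongr
  exact two_mul_mul_exp_neg_le (by positivity) (by positivity) hκs

theorem degSeqOn_iff_ncard_lt {V : Type*} {G : SimpleGraph V} [DecidableRel G.Adj]
    (t ε : ℝ) (S : Finset V) :
    DegSeqOn G ((t - 2) / t + ε) (1 / t) S ↔ ∀ i : ℕ, 1 ≤ i → (i : ℝ) ≤ (#S : ℝ) / t →
      ({v : V | v ∈ S ∧ (#{u ∈ S | G.Adj v u} : ℝ) ≤ (t - 2) * #S / t + i + ε * #S}.ncard : ℝ)
        < i := by
  have hlow (i : ℕ) :
      {v : V | v ∈ S ∧ (#{u ∈ S | G.Adj v u} : ℝ) ≤ (t - 2) * #S / t + i + ε * #S}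
        = lowDegreeOn G S (((t - 2) / t + ε) * #S + i) := by
    rw [lowDegreeOn, coe_filter]
    ring_nf
  simp_rw [hlow, Set.ncard_coe_finset, Nat.cast_lt, DegSeqOn, one_div_mul_eq_div]

theorem degSeqOn_univ_iff_ncard_lt {V : Type*} [Fintype V] {G : SimpleGraph V} [DecidableRel G.Adj]
    (t ε : ℝ) :
    DegSeqOn G ((t - 2) / t + ε) (1 / t) univ ↔
      ∀ i : ℕ, 1 ≤ i → (i : ℝ) ≤ (Fintype.card V : ℝ) / t →
        ({v : V | (G.degree v : ℝ) ≤ (t - 2) * Fintype.card V / t + i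
          + ε * Fintype.card V}.ncard : ℝ) < i := by
  simp only [degSeqOn_iff_ncard_lt, card_univ, mem_univ, true_and,
    ← G.card_neighborFinset_eq_degree, G.neighborFinset_eq_filter]

end

/-- For every `t ≥ 2` and `ε > 0` there is `s0` such that for every `s ≥ s0`
there is `n0` such that for every `n ≥ n0`: if `G` is a graph on an `n`-element vertex set in
`DegSeq_{t,ε}` (for every `1 ≤ i ≤ n/t`, fewer than `i` vertices have degree at most
`(t−2)n/t + i + εn`), then for every `2t`-element vertex set `R`, the number of `s`-element
vertex sets `S ⊇ R` with `G[S] ∈ DegSeq_{t,ε/2}` (with `s` in place of `n`) is at least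
`(1 − e^{−√s})·C(n−2t, s−2t)`. -/
theorem stmt_19 (t : ℕ) (ht : 2 ≤ t) (ε : ℝ) (hε : 0 < ε) :
    ∃ s0 : ℕ, ∀ s : ℕ, s0 ≤ s → ∃ n0 : ℕ, ∀ n : ℕ, n0 ≤ n →
    ∀ (V : Type) [Fintype V] [DecidableEq V], Fintype.card V = n →
    ∀ (G : SimpleGraph V) [DecidableRel G.Adj],
    (∀ i : ℕ, 1 ≤ i → (i : ℝ) ≤ (n : ℝ) / t →
      (({v : V | (G.degree v : ℝ) ≤ ((t : ℝ) - 2) * n / t + i + ε * n} : Set V).ncard : ℝ)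
        < i) →
    ∀ R : Finset V, R.card = 2 * t →
      (1 - Real.exp (-Real.sqrt s)) * ((n - 2*t).choose (s - 2*t) : ℝ) ≤
        (({S : Finset V | S.card = s ∧ R ⊆ S ∧
            ∀ i : ℕ, 1 ≤ i → (i : ℝ) ≤ (s : ℝ) / t →
              (({v : V | v ∈ S ∧
                  (((S.filter (fun u => G.Adj v u)).card : ℝ) ≤
                    ((t : ℝ) - 2) * s / t + i + (ε/2) * s)} : Set V).ncard : ℝ) < i} :
          Set (Finset V)).ncard : ℝ) := by
  obtain ⟨s0, hs0⟩ := stmt_19_general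
    (show ((t : ℝ) - 2) / t + ε / 2 < ((t : ℝ) - 2) / t + ε by linarith) (1 / t) (2 * t)
  refine ⟨s0, fun s hs ↦ ⟨s, ?_⟩⟩
  rintro _ hn V _ _ rfl G _ hG R hR
  have hcount := hs0 s hs V hn G ((degSeqOn_univ_iff_ncard_lt (t : ℝ) ε).2 hG) R hR.le
  rw [hR] at hcount
  convert hcount using 5 with S
  refine and_congr_right fun hS ↦ and_congr_right' ?_
  rw [← hS]
  exact (degSeqOn_iff_ncard_lt (t : ℝ) (ε / 2) S).symm
end
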